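/- arXiv:2406.07838 — 3 statements merged into one kernel-verified Lean document; each statement's English description precedes it below -/
import Mathlib

section
/- Let n ≥ 1 and N = (1, 0, …, 0, −1) ∈ ℤ^{n+1}. The extreme points of the flow polytope F_n(N) are exactly the following flows: for each subset {v_1 < v_2 < ⋯ < v_m} of {1, …, n−1}, the flow assigning value 1 to each edge of the path 0 → v_1 → v_2 → ⋯ → v_m → n and value 0 to every other edge. In particular F_n(1, 0, …, 0, −1) has exactly 2^{n−1} extreme points. -/
open Finset

/-- The entropy-like function `h(t) = (t+1)·log(t+1) − t·log t` (with `h 0 = 0`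
since `Real.log 0 = 0`). -/
noncomputable def entH (t : ℝ) : ℝ := (t + 1) * Real.log (t + 1) - t * Real.log t

/-- `f` is an integer flow on the complete graph `k_{n+1}` with netflow `N`:
`f i j` is the flow on the edge `(i,j)` for `i < j`, it vanishes for `i ≥ j`,
and the netflow at each vertex `i` is `N i`. -/
def IsIntFlow (n : ℕ) (N : Fin (n + 1) → ℤ) (f : Fin (n + 1) → Fin (n + 1) → ℕ) : Prop :=
  (∀ i j : Fin (n + 1), ¬ i < j → f i j = 0) ∧
  ∀ i : Fin (n + 1),
    (∑ j : Fin (n + 1), if i < j then (f i j : ℤ) else 0) -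
      (∑ k : Fin (n + 1), if k < i then (f k i : ℤ) else 0) = N i

/-- The Kostant partition function: the number of integer flows on the complete
graph `k_{n+1}` with netflow `N`. -/
noncomputable def Kn (n : ℕ) (N : Fin (n + 1) → ℤ) : ℕ :=
  Nat.card {f : Fin (n + 1) → Fin (n + 1) → ℕ // IsIntFlow n N f}

/-- The flow polytope of the complete graph `k_{n+1}` with netflow `N`. -/
def FlowPolytope (n : ℕ) (N : Fin (n + 1) → ℝ) : Set (Fin (n + 1) → Fin (n + 1) → ℝ) :=
  {f | (∀ i j : Fin (n + 1), i < j → 0 ≤ f i j) ∧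
    (∀ i j : Fin (n + 1), ¬ i < j → f i j = 0) ∧
    ∀ i : Fin (n + 1),
      (∑ j : Fin (n + 1), if i < j then f i j else 0) -
        (∑ k : Fin (n + 1), if k < i then f k i else 0) = N i}

/-- The flow entropy `H(f)`. -/
noncomputable def flowEntropy (n : ℕ) (N : Fin (n + 1) → ℝ)
    (f : Fin (n + 1) → Fin (n + 1) → ℝ) : ℝ :=
  (∑ i : Fin (n + 1), ∑ j : Fin (n + 1), if i < j then entH (f i j) else 0) +
  ∑ j : Fin (n + 1), if 0 < (j : ℕ) ∧ (j : ℕ) < n then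
    entH (∑ i : Fin (n + 1), if i < j then (N i - f i j) else 0) else 0

/-- Partial sums `s_k = N_0 + ⋯ + N_k`. -/
def sPartial (n : ℕ) (N : Fin (n + 1) → ℤ) (k : ℕ) : ℤ :=
  ∑ j : Fin (n + 1), if (j : ℕ) ≤ k then N j else 0

/-- Extend `(N_0,…,N_{n−1})` to the netflow vector `(N_0,…,N_{n−1},−∑ N_i)`. -/
def extend (n : ℕ) (N : Fin n → ℤ) : Fin (n + 1) → ℤ := Fin.snoc N (-∑ i, N i)

/-- The vertex set `{0} ∪ S ∪ {n}` of the path determined by the set `S` of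
internal vertices. -/
def pathVerts (n : ℕ) (S : Finset (Fin (n + 1))) : Finset (Fin (n + 1)) :=
  insert 0 (insert (Fin.last n) S)

/-- The unit flow along the path `0 → v_1 → ⋯ → v_m → n`, where
`v_1 < ⋯ < v_m` are the elements of `S`: the edges of the path are the pairs of
consecutive elements of `{0} ∪ S ∪ {n}`. -/
def pathFlow (n : ℕ) (S : Finset (Fin (n + 1))) : Fin (n + 1) → Fin (n + 1) → ℝ :=
  fun i j =>
    if i ∈ pathVerts n S ∧ j ∈ pathVerts n S ∧ i < j ∧
        ∀ k ∈ pathVerts n S, ¬(i < k ∧ k < j) then 1 else 0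

/-!
A point `x` of the nonnegative part of an affine space is extreme if and only if no other point
`y` of it satisfies `ε • y ≤ x` for some `ε > 0`. For flow polytopes this says that an extreme flow
is the only flow supported on its support. The unit flow along a path has this property, because
conservation at the vertices forces the value `1` on one edge of the path after the other.
Conversely, the support of any flow from `0` to `n` contains a path from `0` to `n`: following
positive edges, one gets stuck only at the sink. So an extreme flow is the unit flow along such a
path. A path visits the inner vertices with positive outflow, hence distinct sets of inner vertices
give distinct flows.
-/

theorem mem_openSegment_lineMap_one_add {𝕜 E : Type*} [Field 𝕜] [LinearOrder 𝕜]
    [IsStrictOrderedRing 𝕜] [AddCommGroup E] [Module 𝕜 E] (x y : E) {ε : 𝕜} (hε : 0 < ε) :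
    x ∈ openSegment 𝕜 y (AffineMap.lineMap y x (1 + ε)) := by
  refine ⟨ε / (1 + ε), 1 / (1 + ε), by positivity, by positivity, by field_simp; ring, ?_⟩
  rw [AffineMap.lineMap_apply_module]
  match_scalars <;> field_simp
  ring

theorem mem_extremePoints_Ici_zero_inter_iff {𝕜 E : Type*} [Field 𝕜] [LinearOrder 𝕜]
    [IsStrictOrderedRing 𝕜] [AddCommGroup E] [PartialOrder E] [IsOrderedAddMonoid E] [Module 𝕜 E]
    [PosSMulMono 𝕜 E] (A : AffineSubspace 𝕜 E) {x : E} :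
    x ∈ Set.extremePoints 𝕜 (Set.Ici 0 ∩ (A : Set E)) ↔
      (0 ≤ x ∧ x ∈ A) ∧ ∀ y, 0 ≤ y → y ∈ A → (∃ ε : 𝕜, 0 < ε ∧ ε • y ≤ x) → y = x := by
  rw [mem_extremePoints]
  refine and_congr_right fun ⟨hx, hxA⟩ => ⟨?_, ?_⟩
  · rintro h y hy hyA ⟨ε, hε, hle⟩
    have hz : 0 ≤ AffineMap.lineMap y x (1 + ε) := by
      have : AffineMap.lineMap y x (1 + ε) = ε • x + (x - ε • y) := by
        rw [AffineMap.lineMap_apply_module]; module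
      rw [this]
      exact add_nonneg (smul_nonneg hε.le hx) (sub_nonneg.2 hle)
    exact (h y ⟨hy, hyA⟩ _ ⟨hz, AffineMap.lineMap_mem _ hyA hxA⟩
      (mem_openSegment_lineMap_one_add x y hε)).1
  · rintro h y ⟨hy, hyA⟩ z ⟨hz, hzA⟩ ⟨a, b, ha, hb, -, rfl⟩
    exact ⟨h y hy hyA ⟨a, ha, le_add_of_nonneg_right (smul_nonneg hb.le hz)⟩,
      h z hz hzA ⟨b, hb, le_add_of_nonneg_left (smul_nonneg ha.le hy)⟩⟩

theorem exists_pos_smul_le {𝕜 ι : Type*} [Field 𝕜] [LinearOrder 𝕜] [IsStrictOrderedRing 𝕜]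
    [Finite ι] {x y : ι → 𝕜} (hx : 0 ≤ x) (hxy : ∀ i, 0 < y i → 0 < x i) :
    ∃ ε : 𝕜, 0 < ε ∧ ε • y ≤ x := by
  have pointwise (i : ι) : ∃ δ : 𝕜, 0 < δ ∧ ∀ ε, 0 < ε → ε ≤ δ → ε * y i ≤ x i := by
    rcases le_or_gt (y i) 0 with hy | hy
    · exact ⟨1, one_pos, fun ε hε _ => (mul_nonpos_of_nonneg_of_nonpos hε.le hy).trans (hx i)⟩
    · exact ⟨x i / y i, div_pos (hxy i hy) hy, fun ε _ hle => (le_div_iff₀ hy).1 hle⟩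
  choose δ hδ hle using pointwise
  obtain ⟨ε, hε, hεδ⟩ : ∃ ε : 𝕜, 0 < ε ∧ ∀ i, ε ≤ δ i := by
    rcases isEmpty_or_nonempty ι with _ | _
    · exact ⟨1, one_pos, isEmptyElim⟩
    · obtain ⟨i, hi⟩ := Finite.exists_min δ
      exact ⟨δ i, hδ i, hi⟩
  exact ⟨ε, hε, fun i => hle i ε hε (hεδ i)⟩

/-- `i < j` are neighbours in the increasing enumeration of `P`, i.e. `(i, j)` is an edge of the
increasing path with vertex set `P`. -/
def Consecutive {α : Type*} [LinearOrder α] (P : Finset α) (i j : α) : Prop :=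
  i ∈ P ∧ j ∈ P ∧ i < j ∧ ∀ k ∈ P, ¬(i < k ∧ k < j)

namespace Consecutive

variable {α : Type*} [LinearOrder α] {P : Finset α} {i j k : α}

theorem lt (h : Consecutive P i j) : i < j := h.2.2.1

theorem right_unique (hj : Consecutive P i j) (hk : Consecutive P i k) : j = k :=
  le_antisymm (not_lt.1 fun h => hj.2.2.2 k hk.2.1 ⟨hk.lt, h⟩)
    (not_lt.1 fun h => hk.2.2.2 j hj.2.1 ⟨hj.lt, h⟩)

theorem left_unique (hi : Consecutive P i k) (hj : Consecutive P j k) : i = j :=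
  le_antisymm (not_lt.1 fun h => hj.2.2.2 i hi.1 ⟨h, hi.lt⟩)
    (not_lt.1 fun h => hi.2.2.2 j hj.1 ⟨h, hj.lt⟩)

theorem exists_right (hi : i ∈ P) (hk : k ∈ P) (hik : i < k) : ∃ j, Consecutive P i j := by
  obtain ⟨j, hj⟩ := (P.filter (i < ·)).exists_minimal ⟨k, mem_filter.2 ⟨hk, hik⟩⟩
  obtain ⟨hjP, hij⟩ := mem_filter.1 hj.prop
  exact ⟨j, hi, hjP, hij, fun l hl h => hj.not_lt (mem_filter.2 ⟨hl, h.1⟩) h.2⟩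

theorem exists_left (hi : i ∈ P) (hk : k ∈ P) (hki : k < i) : ∃ j, Consecutive P j i := by
  obtain ⟨j, hj⟩ := (P.filter (· < i)).exists_maximal ⟨k, mem_filter.2 ⟨hk, hki⟩⟩
  obtain ⟨hjP, hji⟩ := mem_filter.1 hj.prop
  exact ⟨j, hjP, hi, hji, fun l hl h => hj.not_gt (mem_filter.2 ⟨hl, h.2⟩) h.1⟩

variable [Fintype α] {M : Type*} [AddCommMonoid M] {g : α → α → M}

theorem sum_right (hij : Consecutive P i j) (hg : ∀ k, ¬ Consecutive P i k → g i k = 0) :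
    ∑ k, g i k = g i j :=
  Fintype.sum_eq_single j fun k hk => hg k fun hik => hk (hik.right_unique hij)

theorem sum_left (hij : Consecutive P i j) (hg : ∀ k, ¬ Consecutive P k j → g k j = 0) :
    ∑ k, g k j = g i j :=
  Fintype.sum_eq_single i fun k hk => hg k fun hkj => hk (hkj.left_unique hij)

end Consecutive

theorem exists_finset_consecutive_of_reflTransGen {α : Type*} [LinearOrder α] {r : α → α → Prop}
    (hr : ∀ i j, r i j → i < j) {a b : α} (hab : Relation.ReflTransGen r a b) :
    ∃ P : Finset α, a ∈ P ∧ b ∈ P ∧ (∀ k ∈ P, a ≤ k) ∧ ∀ i j, Consecutive P i j → r i j := by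
  induction hab using Relation.ReflTransGen.head_induction_on with
  | refl =>
    refine ⟨{b}, mem_singleton_self b, mem_singleton_self b, by simp, ?_⟩
    rintro i j ⟨hi, hj, hij, -⟩
    exact absurd hij (by simp_all)
  | @head a c hac _ ih =>
    obtain ⟨P, hcP, hbP, hcle, hPr⟩ := ih
    have hac_lt : a < c := hr a c hac
    have halt (k) (hk : k ∈ P) : a < k := hac_lt.trans_le (hcle k hk)
    refine ⟨insert a P, mem_insert_self a P, mem_insert_of_mem hbP, ?_, ?_⟩
    · exact forall_mem_insert _ _ _ |>.2 ⟨le_rfl, fun k hk => (halt k hk).le⟩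
    rintro i j ⟨hi, hj, hij, hbetween⟩
    have hai : a ≤ i := (mem_insert.1 hi).elim Eq.ge fun hiP => (halt i hiP).le
    have hjP : j ∈ P := mem_of_mem_insert_of_ne hj (hai.trans_lt hij).ne'
    rcases mem_insert.1 hi with rfl | hiP
    · have hjc : c = j := (hcle j hjP).eq_of_not_lt fun hcj =>
        hbetween c (mem_insert_of_mem hcP) ⟨hac_lt, hcj⟩
      exact hjc ▸ hac
    · exact hPr i j ⟨hiP, hjP, hij, fun k hk => hbetween k (mem_insert_of_mem hk)⟩

/-- Outflow minus inflow at each vertex, as a linear map. The sums run over all vertices, without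
the restriction to pairs `i < j`, which is harmless when `f` vanishes at all other pairs. -/
def netflow (V : Type*) [Fintype V] : (V → V → ℝ) →ₗ[ℝ] (V → ℝ) where
  toFun f i := ∑ j, f i j - ∑ k, f k i
  map_add' f g := by ext i; simp only [Pi.add_apply, sum_add_distrib]; ring
  map_smul' c f := by
    ext i
    simp only [Pi.smul_apply, smul_eq_mul, ← mul_sum, RingHom.id_apply]
    ring

theorem netflow_apply {V : Type*} [Fintype V] (f : V → V → ℝ) (i : V) :
    netflow V f i = ∑ j, f i j - ∑ k, f k i := rfl

theorem sum_ite_lt_sub_sum_ite_lt_eq_netflow {V : Type*} [Fintype V] [LinearOrder V]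
    {f : V → V → ℝ} (hzero : ∀ i j, ¬ i < j → f i j = 0) (i : V) :
    ((∑ j, if i < j then f i j else 0) - ∑ k, if k < i then f k i else 0) = netflow V f i := by
  rw [netflow_apply]
  congr! 2 with j _ k _ <;> grind

theorem exists_pos_outflow {V : Type*} [Fintype V] {f : V → V → ℝ} {v : V}
    (hv : 0 < netflow V f v + ∑ u, f u v) : ∃ w, 0 < f v w := by
  rw [netflow_apply, sub_add_cancel] at hv
  by_contra! hout
  exact hv.not_ge (sum_nonpos fun w _ => hout w)

/-- The affine space of real flows of either sign on the edges `i < j` with netflow `N`; the flow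
polytope is its nonnegative part. -/
def flowSpace (n : ℕ) (N : Fin (n + 1) → ℝ) :
    AffineSubspace ℝ (Fin (n + 1) → Fin (n + 1) → ℝ) where
  carrier := {f | (∀ i j, ¬ i < j → f i j = 0) ∧ netflow (Fin (n + 1)) f = N}
  smul_vsub_vadd_mem' := by
    rintro c f g h ⟨hf, hfN⟩ ⟨hg, hgN⟩ ⟨hh, hhN⟩
    refine ⟨fun i j hij => ?_, ?_⟩
    · simp [hf i j hij, hg i j hij, hh i j hij]
    · simp [hfN, hgN, hhN]

section FlowPolytope

variable {n : ℕ} {N : Fin (n + 1) → ℝ} {f : Fin (n + 1) → Fin (n + 1) → ℝ}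

theorem mem_flowSpace :
    f ∈ flowSpace n N ↔ (∀ i j, ¬ i < j → f i j = 0) ∧ netflow (Fin (n + 1)) f = N := Iff.rfl

theorem flowPolytope_eq_Ici_zero_inter_flowSpace (n : ℕ) (N : Fin (n + 1) → ℝ) :
    FlowPolytope n N = Set.Ici 0 ∩ (flowSpace n N : Set (Fin (n + 1) → Fin (n + 1) → ℝ)) := by
  ext f
  constructor
  · rintro ⟨hnonneg, hzero, hnet⟩
    refine ⟨fun i j => ?_, hzero, funext fun i => ?_⟩
    · exact (lt_or_ge i j).elim (hnonneg i j) fun h => (hzero i j h.not_gt).ge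
    · rw [← sum_ite_lt_sub_sum_ite_lt_eq_netflow hzero, hnet]
  · rintro ⟨hnonneg, hzero, hnet⟩
    refine ⟨fun i j _ => hnonneg i j, hzero, fun i => ?_⟩
    rw [sum_ite_lt_sub_sum_ite_lt_eq_netflow hzero, hnet]

theorem reflTransGen_pos_last (hnonneg : 0 ≤ f) (hf : f ∈ flowSpace n N) {s : Fin (n + 1)}
    (hs : 0 < N s) (hN : ∀ v, v ≠ Fin.last n → 0 ≤ N v) :
    Relation.ReflTransGen (fun i j => 0 < f i j) s (Fin.last n) := by
  obtain ⟨hzero, rfl⟩ := mem_flowSpace.1 hf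
  obtain ⟨v, hv⟩ :=
    (Set.toFinite {v | Relation.ReflTransGen (fun i j => 0 < f i j) s v}).exists_maximal ⟨s, .refl⟩
  suffices v = Fin.last n from this ▸ hv.prop
  by_contra hlast
  obtain ⟨w, hw⟩ : ∃ w, 0 < f v w := by
    apply exists_pos_outflow
    rcases hv.prop.cases_tail with rfl | ⟨u, -, hu⟩
    · exact add_pos_of_pos_of_nonneg hs (sum_nonneg fun u _ => hnonneg u v)
    · exact add_pos_of_nonneg_of_pos (hN v hlast)
        (sum_pos' (fun u _ => hnonneg u v) ⟨u, mem_univ u, hu⟩)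
  have hvw : v < w := not_not.1 fun h => hw.ne' (hzero v w h)
  exact hv.not_gt (hv.prop.tail hw) hvw

end FlowPolytope

section PathFlow

variable {n : ℕ} {S : Finset (Fin (n + 1))} {i j : Fin (n + 1)}

theorem pathFlow_of_consecutive (h : Consecutive (pathVerts n S) i j) : pathFlow n S i j = 1 :=
  if_pos h

theorem pathFlow_of_not_consecutive (h : ¬ Consecutive (pathVerts n S) i j) :
    pathFlow n S i j = 0 :=
  if_neg h

theorem pathFlow_nonneg (n : ℕ) (S : Finset (Fin (n + 1))) : 0 ≤ pathFlow n S := fun i j => by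
  unfold pathFlow
  split_ifs <;> simp

theorem zero_mem_pathVerts (n : ℕ) (S : Finset (Fin (n + 1))) : 0 ∈ pathVerts n S :=
  mem_insert_self _ _

theorem last_mem_pathVerts (n : ℕ) (S : Finset (Fin (n + 1))) : Fin.last n ∈ pathVerts n S :=
  mem_insert_of_mem (mem_insert_self _ _)

theorem exists_consecutive_pathVerts_right (hi : i ∈ pathVerts n S) (hlast : i ≠ Fin.last n) :
    ∃ j, Consecutive (pathVerts n S) i j :=
  Consecutive.exists_right hi (last_mem_pathVerts n S) (Fin.lt_last_iff_ne_last.2 hlast)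

theorem exists_consecutive_pathVerts_left (hi : i ∈ pathVerts n S) (hzero : i ≠ 0) :
    ∃ j, Consecutive (pathVerts n S) j i :=
  Consecutive.exists_left hi (zero_mem_pathVerts n S) (Fin.pos_iff_ne_zero.2 hzero)

theorem pathVerts_inter_Ioo {P : Finset (Fin (n + 1))} (hzero : 0 ∈ P) (hlast : Fin.last n ∈ P) :
    pathVerts n (P ∩ Ioo 0 (Fin.last n)) = P := by
  ext v
  simp only [pathVerts, mem_insert, mem_inter, mem_Ioo, Fin.pos_iff_ne_zero,
    Fin.lt_last_iff_ne_last]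
  grind

theorem sum_pathFlow_right (n : ℕ) (S : Finset (Fin (n + 1))) (i : Fin (n + 1)) :
    ∑ j, pathFlow n S i j = if i ∈ pathVerts n S ∧ i ≠ Fin.last n then 1 else 0 := by
  split_ifs with h
  · obtain ⟨j, hij⟩ := exists_consecutive_pathVerts_right h.1 h.2
    rw [hij.sum_right fun _ => pathFlow_of_not_consecutive, pathFlow_of_consecutive hij]
  · exact sum_eq_zero fun j _ => pathFlow_of_not_consecutive fun hij =>
      h ⟨hij.1, (hij.lt.trans_le (Fin.le_last j)).ne⟩

theorem sum_pathFlow_left (n : ℕ) (S : Finset (Fin (n + 1))) (j : Fin (n + 1)) :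
    ∑ i, pathFlow n S i j = if j ∈ pathVerts n S ∧ j ≠ 0 then 1 else 0 := by
  split_ifs with h
  · obtain ⟨i, hij⟩ := exists_consecutive_pathVerts_left h.1 h.2
    rw [hij.sum_left fun _ => pathFlow_of_not_consecutive, pathFlow_of_consecutive hij]
  · exact sum_eq_zero fun i _ => pathFlow_of_not_consecutive fun hij =>
      h ⟨hij.2.1, ((Fin.zero_le i).trans_lt hij.lt).ne'⟩

theorem pathFlow_injOn (n : ℕ) :
    Set.InjOn (pathFlow n) ((Ioo 0 (Fin.last n)).powerset : Set (Finset (Fin (n + 1)))) := by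
  have mem_iff {S : Finset (Fin (n + 1))} (hS : S ⊆ Ioo 0 (Fin.last n)) (v : Fin (n + 1)) :
      v ∈ S ↔ v ∈ Ioo 0 (Fin.last n) ∧ ∑ j, pathFlow n S v j = 1 := by
    have hv : v ∈ S → 0 < v ∧ v < Fin.last n := fun h => mem_Ioo.1 (hS h)
    rw [sum_pathFlow_right, mem_Ioo]
    simp only [pathVerts, mem_insert]
    grind
  intro S hS T hT hST
  ext v
  rw [mem_iff (mem_powerset.1 hS), mem_iff (mem_powerset.1 hT), hST]

end PathFlow

/-- The netflow vector `(1, 0, …, 0, -1)`, which is `0` when `n = 0`. -/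
def unitNetflow (n : ℕ) : Fin (n + 1) → ℝ := Pi.single 0 1 - Pi.single (Fin.last n) 1

section UnitNetflow

variable {n : ℕ} {S : Finset (Fin (n + 1))}

theorem unitNetflow_apply (n : ℕ) (i : Fin (n + 1)) :
    unitNetflow n i = (if i = 0 then 1 else 0) - if i = Fin.last n then 1 else 0 := by
  simp [unitNetflow, Pi.single_apply]

theorem unitNetflow_eq_ite (hn : 1 ≤ n) :
    unitNetflow n =
      fun i : Fin (n + 1) => if (i : ℕ) = 0 then 1 else if (i : ℕ) = n then -1 else 0 := by
  ext i
  rw [unitNetflow_apply]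
  simp only [Fin.ext_iff, Fin.val_zero, Fin.val_last]
  grind

theorem pathFlow_mem_flowSpace (n : ℕ) (S : Finset (Fin (n + 1))) :
    pathFlow n S ∈ flowSpace n (unitNetflow n) := by
  refine ⟨fun i j hij => pathFlow_of_not_consecutive fun h => hij h.lt, funext fun i => ?_⟩
  have hzero := zero_mem_pathVerts n S
  have hlast := last_mem_pathVerts n S
  rw [netflow_apply, sum_pathFlow_right, sum_pathFlow_left, unitNetflow_apply]
  grind

theorem eq_pathFlow_of_netflow_eq {g : Fin (n + 1) → Fin (n + 1) → ℝ}
    (hnet : netflow (Fin (n + 1)) g = unitNetflow n)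
    (hsupp : ∀ i j, ¬ Consecutive (pathVerts n S) i j → g i j = 0) : g = pathFlow n S := by
  have eq_one (i) : ∀ j, Consecutive (pathVerts n S) i j → g i j = 1 := by
    induction i using WellFoundedLT.induction with
    | ind i ih =>
      intro j hij
      have hlast : i ≠ Fin.last n := (hij.lt.trans_le (Fin.le_last j)).ne
      have hbalance : g i j - ∑ k, g k i = if i = 0 then 1 else 0 := by
        rw [← hij.sum_right fun k => hsupp i k, ← netflow_apply, hnet, unitNetflow_apply,
          if_neg hlast, sub_zero]
      rcases eq_or_ne i 0 with rfl | hzero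
      · have hin : ∑ k, g k 0 = 0 :=
          sum_eq_zero fun k _ => hsupp k 0 fun h => Fin.not_lt_zero k h.lt
        simpa [hin] using hbalance
      · obtain ⟨k, hki⟩ := exists_consecutive_pathVerts_left hij.1 hzero
        rw [hki.sum_left fun l => hsupp l i, ih k hki.lt i hki, if_neg hzero] at hbalance
        exact sub_eq_zero.1 hbalance
  ext i j
  by_cases hij : Consecutive (pathVerts n S) i j
  · rw [eq_one i j hij, pathFlow_of_consecutive hij]
  · rw [hsupp i j hij, pathFlow_of_not_consecutive hij]

theorem pathFlow_mem_extremePoints (n : ℕ) (S : Finset (Fin (n + 1))) :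
    pathFlow n S ∈ Set.extremePoints ℝ (FlowPolytope n (unitNetflow n)) := by
  rw [flowPolytope_eq_Ici_zero_inter_flowSpace, mem_extremePoints_Ici_zero_inter_iff]
  refine ⟨⟨pathFlow_nonneg n S, pathFlow_mem_flowSpace n S⟩, ?_⟩
  rintro g hg hgN ⟨ε, hε, hle⟩
  refine eq_pathFlow_of_netflow_eq hgN.2 fun i j hij => (hg i j).antisymm' ?_
  have hmul : ε * g i j ≤ 0 := (hle i j).trans_eq (pathFlow_of_not_consecutive hij)
  exact nonpos_of_mul_nonpos_right hmul hε

theorem exists_pathFlow_pos {f : Fin (n + 1) → Fin (n + 1) → ℝ} (hnonneg : 0 ≤ f)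
    (hf : f ∈ flowSpace n (unitNetflow n)) :
    ∃ S ⊆ Ioo 0 (Fin.last n), ∀ i j, 0 < pathFlow n S i j → 0 < f i j := by
  have hreach : Relation.ReflTransGen (fun i j => 0 < f i j) 0 (Fin.last n) := by
    rcases eq_or_ne 0 (Fin.last n) with h | h
    · exact h ▸ .refl
    · refine reflTransGen_pos_last hnonneg hf ?_ fun v hv => ?_
      · simp [unitNetflow_apply, h]
      · rw [unitNetflow_apply, if_neg hv]
        split_ifs <;> simp
  obtain ⟨P, hzero, hlast, -, hP⟩ := exists_finset_consecutive_of_reflTransGen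
    (fun i j hij => not_not.1 fun h => hij.ne' (hf.1 i j h)) hreach
  refine ⟨P ∩ Ioo 0 (Fin.last n), inter_subset_right, fun i j hij => hP i j ?_⟩
  rw [← pathVerts_inter_Ioo hzero hlast]
  exact not_not.1 fun h => hij.ne' (pathFlow_of_not_consecutive h)

theorem extremePoints_flowPolytope_unitNetflow (n : ℕ) :
    Set.extremePoints ℝ (FlowPolytope n (unitNetflow n)) =
      pathFlow n '' ((Ioo 0 (Fin.last n)).powerset : Set (Finset (Fin (n + 1)))) := by
  refine Set.Subset.antisymm (fun f hfext => ?_) ?_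
  · rw [flowPolytope_eq_Ici_zero_inter_flowSpace, mem_extremePoints_Ici_zero_inter_iff] at hfext
    obtain ⟨⟨hnonneg, hf⟩, hmin⟩ := hfext
    obtain ⟨S, hS, hpos⟩ := exists_pathFlow_pos hnonneg hf
    obtain ⟨ε, hε, hle⟩ := exists_pos_smul_le
      (x := Function.uncurry f) (y := Function.uncurry (pathFlow n S))
      (fun p => hnonneg p.1 p.2) fun p => hpos p.1 p.2
    exact ⟨S, mem_powerset.2 hS, hmin _ (pathFlow_nonneg n S) (pathFlow_mem_flowSpace n S)
      ⟨ε, hε, fun i j => hle (i, j)⟩⟩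
  · rintro _ ⟨S, -, rfl⟩
    exact pathFlow_mem_extremePoints n S

end UnitNetflow

/-- **Proposition (vertices of the CRY polytope).** The extreme points of
`F_n(1,0,…,0,−1)` are exactly the unit flows along paths `0 → v_1 → ⋯ → v_m → n`
over subsets `{v_1 < ⋯ < v_m} ⊆ {1,…,n−1}`; in particular there are exactly
`2^{n−1}` of them. -/
theorem extremePoints_CRY (n : ℕ) (hn : 1 ≤ n) :
    Set.extremePoints ℝ
        (FlowPolytope n fun i =>
          if (i : ℕ) = 0 then 1 else if (i : ℕ) = n then -1 else 0) =
      {f | ∃ S : Finset (Fin (n + 1)),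
        (∀ v ∈ S, 0 < (v : ℕ) ∧ (v : ℕ) < n) ∧ f = pathFlow n S} ∧
    (Set.extremePoints ℝ
        (FlowPolytope n fun i =>
          if (i : ℕ) = 0 then 1 else if (i : ℕ) = n then -1 else 0)).ncard =
      2 ^ (n - 1) := by
  rw [← unitNetflow_eq_ite hn, extremePoints_flowPolytope_unitNetflow]
  constructor
  · ext f
    simp only [Set.mem_image, mem_coe, mem_powerset, subset_iff, mem_Ioo, Fin.lt_def, Fin.val_zero,
      Fin.val_last, Set.mem_ofPred_eq, eq_comm (a := f)]
  · rw [(pathFlow_injOn n).ncard_image, Set.ncard_coe_finset, card_powerset, Fin.card_Ioo,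
      Fin.val_last, Fin.val_zero, Nat.sub_zero]
end

section
/- Let n ≥ 1 and N = (N_0, …, N_{n−1}, −∑_{i=0}^{n−1} N_i) where all N_i are positive integers. Set s_k = ∑_{j=0}^{k} N_j and c_k = N_{n−k}/(k+1) + s_{n−k}/(k(k+1)) for 1 ≤ k ≤ n. Then the set of extreme points of the flow polytope F_n(N) has exactly n! elements, and its average (1/n!) · ∑_{v extreme} v is the flow f with f_{ij} = c_{n−i} for all 0 ≤ i < j ≤ n. -/
open Finset

/-!
Since every vertex other than the sink has positive netflow, flow leaves it along at least one edge.
Starting from an extreme point, choose at each such vertex `i` one edge `i → g i` carrying positive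
flow, and reroute everything along the chosen edges. The rerouted flow has support contained in that
of the extreme point, which could therefore be pushed slightly away from it inside the polytope;
hence the two agree. So the extreme points are the flows `treeFlow N g`, and there are
`n · (n - 1) ⋯ 1` choices of `g`.

Transposing two possible values of `g i` does not change the flow arriving at `i`, so in the average
of the extreme points all edges out of `i` carry the same flow. The average also lies in the
polytope, and conservation of flow then determines these values one vertex at a time.
-/

lemma exists_pos_extension_nonneg {ι : Type*} [Finite ι] {a b : ι → ℝ} (ha : ∀ i, 0 ≤ a i)
    (hsupp : ∀ i, a i = 0 → b i = 0) :
    ∃ ε : ℝ, 0 < ε ∧ ∀ i, 0 ≤ (1 + ε) * a i + -ε * b i := by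
  have hev : ∀ᶠ ε : ℝ in nhdsWithin 0 (Set.Ioi 0), ∀ i, 0 ≤ (1 + ε) * a i + -ε * b i := by
    refine Filter.eventually_all.2 fun i ↦ ?_
    rcases (ha i).eq_or_lt with hzero | hpos
    · simp [← hzero, hsupp i hzero.symm]
    · have hlim : Filter.Tendsto (fun ε : ℝ ↦ (1 + ε) * a i + -ε * b i) (nhds 0) (nhds (a i)) :=
        Continuous.tendsto' (by fun_prop) _ _ (by simp)
      exact ((hlim.mono_left nhdsWithin_le_nhds).eventually_const_lt hpos).mono fun _ ↦ le_of_lt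
  obtain ⟨ε, hnonneg, hε⟩ := (hev.and self_mem_nhdsWithin).exists
  exact ⟨ε, hε, hnonneg⟩

namespace FlowPolytope

variable {n : ℕ} {N : Fin (n + 1) → ℝ} {f x y v : Fin (n + 1) → Fin (n + 1) → ℝ}
  {g : Fin (n + 1) → Fin (n + 1)} {i j j' : Fin (n + 1)}

lemma mem_iff : f ∈ FlowPolytope n N ↔
    (∀ i j, 0 ≤ f i j) ∧ (∀ i j, ¬ i < j → f i j = 0) ∧
      ∀ i, ∑ j ∈ Ioi i, f i j = N i + ∑ k ∈ Iio i, f k i := by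
  simp only [FlowPolytope, Set.mem_ofPred_eq, ← sum_filter, filter_lt_eq_Ioi, filter_gt_eq_Iio,
    sub_eq_iff_eq_add]
  refine ⟨fun ⟨hnonneg, hsupp, hcons⟩ ↦ ⟨fun i j ↦ ?_, hsupp, hcons⟩,
    fun ⟨hnonneg, hsupp, hcons⟩ ↦ ⟨fun i j _ ↦ hnonneg i j, hsupp, hcons⟩⟩
  by_cases hij : i < j
  · exact hnonneg i j hij
  · exact (hsupp i j hij).ge

lemma nonneg (hf : f ∈ FlowPolytope n N) (i j : Fin (n + 1)) : 0 ≤ f i j :=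
  (mem_iff.1 hf).1 i j

lemma eq_zero_of_not_lt (hf : f ∈ FlowPolytope n N) (hij : ¬ i < j) : f i j = 0 :=
  hf.2.1 i j hij

lemma sum_Ioi_eq (hf : f ∈ FlowPolytope n N) (i : Fin (n + 1)) :
    ∑ j ∈ Ioi i, f i j = N i + ∑ k ∈ Iio i, f k i :=
  (mem_iff.1 hf).2.2 i

lemma affineCombination_mem (hx : x ∈ FlowPolytope n N) (hy : y ∈ FlowPolytope n N) {a b : ℝ}
    (hab : a + b = 1) (hnonneg : ∀ i j, 0 ≤ a * x i j + b * y i j) :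
    a • x + b • y ∈ FlowPolytope n N := by
  refine mem_iff.2 ⟨hnonneg, fun i j hij ↦ ?_, fun i ↦ ?_⟩
  · simp [eq_zero_of_not_lt hx hij, eq_zero_of_not_lt hy hij]
  · simp only [Pi.add_apply, Pi.smul_apply, smul_eq_mul, sum_add_distrib, ← mul_sum,
      sum_Ioi_eq hx, sum_Ioi_eq hy]
    linear_combination N i * hab

lemma convex : Convex ℝ (FlowPolytope n N) := fun _ hx _ hy _ _ ha hb hab ↦
  affineCombination_mem hx hy hab fun i j ↦
    add_nonneg (mul_nonneg ha (nonneg hx i j)) (mul_nonneg hb (nonneg hy i j))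

lemma eq_zero_of_mem_openSegment (hx : x ∈ FlowPolytope n N) (hy : y ∈ FlowPolytope n N)
    (hf : f ∈ openSegment ℝ x y) (hij : f i j = 0) : x i j = 0 := by
  obtain ⟨a, b, ha, hb, -, rfl⟩ := hf
  have hsum : a * x i j + b * y i j = 0 := hij
  have hax : a * x i j = 0 := ((add_eq_zero_iff_of_nonneg (mul_nonneg ha.le (nonneg hx i j))
    (mul_nonneg hb.le (nonneg hy i j))).1 hsum).1
  exact (mul_eq_zero.1 hax).resolve_left ha.ne'

lemma eq_of_mem_extremePoints_of_support
    (hf : f ∈ (FlowPolytope n N).extremePoints ℝ) (hv : v ∈ FlowPolytope n N)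
    (hsupp : ∀ i j, f i j = 0 → v i j = 0) : v = f := by
  obtain ⟨ε, hε, hnonneg⟩ := exists_pos_extension_nonneg
    (fun e : Fin (n + 1) × Fin (n + 1) ↦ nonneg hf.1 e.1 e.2) fun e ↦ hsupp e.1 e.2
  have hw : (1 + ε) • f + (-ε) • v ∈ FlowPolytope n N :=
    affineCombination_mem hf.1 hv (by ring) fun i j ↦ hnonneg (i, j)
  refine hf.2 hv hw
    ⟨ε / (1 + ε), 1 / (1 + ε), by positivity, by positivity, by field_simp; ring, ?_⟩
  ext i j
  simp only [Pi.add_apply, Pi.smul_apply, smul_eq_mul]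
  field_simp
  ring

lemma ext_of_support (hx : x ∈ FlowPolytope n N) (hy : y ∈ FlowPolytope n N)
    (hxg : ∀ i j, j ≠ g i → x i j = 0) (hyg : ∀ i j, j ≠ g i → y i j = 0) : x = y := by
  have apply_eq {z : Fin (n + 1) → Fin (n + 1) → ℝ} (hz : z ∈ FlowPolytope n N)
      (hzg : ∀ i j, j ≠ g i → z i j = 0) {i : Fin (n + 1)} (hi : i < g i) :
      z i (g i) = N i + ∑ k ∈ Iio i, z k i := by
    rw [← sum_Ioi_eq hz, sum_eq_single_of_mem (g i) (mem_Ioi.2 hi) fun j _ hj ↦ hzg i j hj]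
  funext i
  induction i using WellFoundedLT.induction with
  | ind i ih =>
    funext j
    by_cases hij : i < j
    · by_cases hj : j = g i
      · subst hj
        rw [apply_eq hx hxg hij, apply_eq hy hyg hij]
        exact congrArg _ (sum_congr rfl fun k hk ↦ congrFun (ih k (mem_Iio.1 hk)) i)
      · rw [hxg i j hj, hyg i j hj]
    · rw [eq_zero_of_not_lt hx hij, eq_zero_of_not_lt hy hij]

/-- The ways to choose one edge out of every vertex other than the sink `Fin.last n`: the chosen
edge at `i` goes to `g i`. At the sink, where there is no edge to choose, `g` takes the value
`Fin.last n`, so that distinct maps are distinct choices. -/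
def edgeChoices (n : ℕ) : Finset (Fin (n + 1) → Fin (n + 1)) :=
  Fintype.piFinset fun i ↦ if i = Fin.last n then {i} else Ioi i

lemma mem_edgeChoices :
    g ∈ edgeChoices n ↔ g (Fin.last n) = Fin.last n ∧ ∀ i ≠ Fin.last n, i < g i := by
  refine Fintype.mem_piFinset.trans ⟨fun hg ↦ ⟨by simpa using hg (Fin.last n), fun i hi ↦ ?_⟩,
    fun ⟨hlast, hlt⟩ i ↦ ?_⟩
  · simpa [hi] using hg i
  · split_ifs with hi
    · simp [hi, hlast]
    · exact mem_Ioi.2 (hlt i hi)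

lemma card_edgeChoices (n : ℕ) : #(edgeChoices n) = n.factorial := by
  have hcard (i : Fin n) :
      #(if i.castSucc = Fin.last n then {i.castSucc} else Ioi i.castSucc) = n - i := by
    simp [Fin.castSucc_ne_last]
  rw [edgeChoices, Fintype.card_piFinset, Fin.prod_univ_castSucc, Fintype.prod_congr _ _ hcard,
    Fin.prod_univ_eq_prod_range (fun i ↦ n - i), ← Nat.descFactorial_eq_prod_range,
    Nat.descFactorial_self]
  simp

lemma update_swap_mem_edgeChoices (hg : g ∈ edgeChoices n) (hj : i < j) (hj' : i < j') :
    Function.update g i (Equiv.swap j j' (g i)) ∈ edgeChoices n := by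
  obtain ⟨hlast, hlt⟩ := mem_edgeChoices.1 hg
  have hi : i ≠ Fin.last n := Fin.ne_last_of_lt hj
  refine mem_edgeChoices.2 ⟨by rwa [Function.update_of_ne hi.symm], fun k hk ↦ ?_⟩
  by_cases hki : k = i
  · subst hki
    rw [Function.update_self, Equiv.swap_apply_def]
    split_ifs
    exacts [hj', hj, hlt k hk]
  · rw [Function.update_of_ne hki]
    exact hlt k hk

/-- The total flow through vertex `i` when everything that enters a vertex, including its netflow,
leaves along the edge chosen by `g`. -/
noncomputable def throughput (N : Fin (n + 1) → ℝ) (g : Fin (n + 1) → Fin (n + 1))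
    (i : Fin (n + 1)) : ℝ :=
  N i + ∑ k : Iio i, if g k = i then throughput N g k else 0
termination_by i
decreasing_by exact Fin.lt_def.1 (mem_Iio.1 k.2)

/-- The flow supported on the edges `i → g i`. For `g ∈ edgeChoices n` these edges form a spanning
tree directed towards the sink. -/
noncomputable def treeFlow (N : Fin (n + 1) → ℝ) (g : Fin (n + 1) → Fin (n + 1))
    (i j : Fin (n + 1)) : ℝ :=
  if i < j ∧ g i = j then throughput N g i else 0

lemma treeFlow_of_not_lt (hij : ¬ i < j) : treeFlow N g i j = 0 := by
  simp [treeFlow, hij]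

lemma treeFlow_of_ne (hj : j ≠ g i) : treeFlow N g i j = 0 := by
  simp [treeFlow, hj.symm]

lemma treeFlow_apply_self (hi : i < g i) : treeFlow N g i (g i) = throughput N g i := by
  simp [treeFlow, hi]

lemma throughput_eq (N : Fin (n + 1) → ℝ) (g : Fin (n + 1) → Fin (n + 1)) (i : Fin (n + 1)) :
    throughput N g i = N i + ∑ k ∈ Iio i, treeFlow N g k i := by
  rw [throughput, ← sum_coe_sort (Iio i)]
  refine congrArg _ (sum_congr rfl fun k _ ↦ ?_)
  simp only [treeFlow, mem_Iio.1 k.2, true_and]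

lemma throughput_congr {g' : Fin (n + 1) → Fin (n + 1)} (h : ∀ k < i, g k = g' k) :
    throughput N g i = throughput N g' i := by
  induction i using WellFoundedLT.induction with
  | ind i ih =>
    rw [throughput_eq, throughput_eq]
    refine congrArg _ (sum_congr rfl fun k hk ↦ ?_)
    have hki : k < i := mem_Iio.1 hk
    simp only [treeFlow, h k hki, ih k hki fun l hl ↦ h l (hl.trans hki)]

lemma throughput_nonneg (hN : ∀ i ≠ Fin.last n, 0 ≤ N i) (hi : i ≠ Fin.last n) :
    0 ≤ throughput N g i := by
  induction i using WellFoundedLT.induction with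
  | ind i ih =>
    rw [throughput_eq]
    refine add_nonneg (hN i hi) (sum_nonneg fun k hk ↦ ?_)
    have hki : k < i := mem_Iio.1 hk
    unfold treeFlow
    split_ifs
    exacts [ih k hki (Fin.ne_last_of_lt hki), le_rfl]

lemma treeFlow_nonneg (hN : ∀ i ≠ Fin.last n, 0 ≤ N i) (i j : Fin (n + 1)) :
    0 ≤ treeFlow N g i j := by
  unfold treeFlow
  split_ifs with hij
  exacts [throughput_nonneg hN (Fin.ne_last_of_lt hij.1), le_rfl]

lemma throughput_pos (hN : ∀ i ≠ Fin.last n, 0 < N i) (hi : i ≠ Fin.last n) :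
    0 < throughput N g i := by
  rw [throughput_eq]
  exact add_pos_of_pos_of_nonneg (hN i hi)
    (sum_nonneg fun k _ ↦ treeFlow_nonneg (fun l hl ↦ (hN l hl).le) k i)

lemma conservation_of_ne_last (hsum : ∑ i, N i = 0)
    (h : ∀ i ≠ Fin.last n, ∑ j ∈ Ioi i, f i j = N i + ∑ k ∈ Iio i, f k i) (i : Fin (n + 1)) :
    ∑ j ∈ Ioi i, f i j = N i + ∑ k ∈ Iio i, f k i := by
  rcases eq_or_ne i (Fin.last n) with rfl | hi
  · have htotal : ∑ i, ∑ j ∈ Ioi i, f i j = ∑ i, (N i + ∑ k ∈ Iio i, f k i) := by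
      rw [sum_add_distrib, hsum, zero_add]
      exact sum_comm' (by simp)
    rw [Fin.sum_univ_castSucc, Fin.sum_univ_castSucc (n := n),
      Fintype.sum_congr _ _ fun k ↦ h k.castSucc (Fin.castSucc_ne_last k)] at htotal
    exact add_left_cancel htotal
  · exact h i hi

lemma treeFlow_mem (hN : ∀ i ≠ Fin.last n, 0 ≤ N i) (hsum : ∑ i, N i = 0)
    (hg : g ∈ edgeChoices n) : treeFlow N g ∈ FlowPolytope n N := by
  refine mem_iff.2 ⟨treeFlow_nonneg hN, fun i j ↦ treeFlow_of_not_lt,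
    conservation_of_ne_last hsum fun i hi ↦ ?_⟩
  have hgi : i < g i := (mem_edgeChoices.1 hg).2 i hi
  rw [sum_eq_single_of_mem (g i) (mem_Ioi.2 hgi) fun j _ hj ↦ treeFlow_of_ne hj,
    treeFlow_apply_self hgi, throughput_eq]

lemma treeFlow_mem_extremePoints (hN : ∀ i ≠ Fin.last n, 0 ≤ N i) (hsum : ∑ i, N i = 0)
    (hg : g ∈ edgeChoices n) : treeFlow N g ∈ (FlowPolytope n N).extremePoints ℝ := by
  have hmem : treeFlow N g ∈ FlowPolytope n N := treeFlow_mem hN hsum hg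
  refine mem_extremePoints_iff_left.2 ⟨hmem, fun x hx y hy hseg ↦ ?_⟩
  exact ext_of_support hx hmem
    (fun i j hj ↦ eq_zero_of_mem_openSegment hx hy hseg (treeFlow_of_ne hj))
    fun i j ↦ treeFlow_of_ne

lemma exists_pos_of_mem (hf : f ∈ FlowPolytope n N) (hi : 0 < N i) : ∃ j, i < j ∧ 0 < f i j := by
  have hout : 0 < ∑ j ∈ Ioi i, f i j := by
    rw [sum_Ioi_eq hf]
    exact add_pos_of_pos_of_nonneg hi (sum_nonneg fun k _ ↦ nonneg hf k i)
  by_contra! hnonpos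
  exact hout.not_ge (sum_nonpos fun j hj ↦ hnonpos j (mem_Ioi.1 hj))

lemma exists_edgeChoice_pos (hN : ∀ i ≠ Fin.last n, 0 < N i) (hf : f ∈ FlowPolytope n N) :
    ∃ g ∈ edgeChoices n, ∀ i ≠ Fin.last n, 0 < f i (g i) := by
  have hex (i : Fin (n + 1)) :
      ∃ j, (i = Fin.last n → j = Fin.last n) ∧ (i ≠ Fin.last n → i < j ∧ 0 < f i j) := by
    rcases eq_or_ne i (Fin.last n) with hi | hi
    · exact ⟨Fin.last n, fun _ ↦ rfl, fun h ↦ absurd hi h⟩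
    · obtain ⟨j, hj⟩ := exists_pos_of_mem hf (hN i hi)
      exact ⟨j, fun h ↦ absurd h hi, fun _ ↦ hj⟩
  choose g hlast hg using hex
  exact ⟨g, mem_edgeChoices.2 ⟨hlast _ rfl, fun i hi ↦ (hg i hi).1⟩, fun i hi ↦ (hg i hi).2⟩

lemma exists_treeFlow_eq (hN : ∀ i ≠ Fin.last n, 0 < N i) (hsum : ∑ i, N i = 0)
    (hf : f ∈ (FlowPolytope n N).extremePoints ℝ) : ∃ g ∈ edgeChoices n, treeFlow N g = f := by
  obtain ⟨g, hg, hpos⟩ := exists_edgeChoice_pos hN hf.1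
  refine ⟨g, hg, eq_of_mem_extremePoints_of_support hf
    (treeFlow_mem (fun i hi ↦ (hN i hi).le) hsum hg) fun i j hzero ↦ ?_⟩
  by_cases hij : i < j
  · refine treeFlow_of_ne ?_
    rintro rfl
    exact (hpos i (Fin.ne_last_of_lt hij)).ne' hzero
  · exact treeFlow_of_not_lt hij

lemma extremePoints_eq_image_treeFlow (hN : ∀ i ≠ Fin.last n, 0 < N i) (hsum : ∑ i, N i = 0) :
    (FlowPolytope n N).extremePoints ℝ = treeFlow N '' edgeChoices n := by
  refine Set.Subset.antisymm (fun f hf ↦ exists_treeFlow_eq hN hsum hf) ?_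
  rintro _ ⟨g, hg, rfl⟩
  exact treeFlow_mem_extremePoints (fun i hi ↦ (hN i hi).le) hsum hg

lemma injOn_treeFlow (hN : ∀ i ≠ Fin.last n, 0 < N i) :
    Set.InjOn (treeFlow N) (edgeChoices n) := by
  intro g hg g' hg' h
  obtain ⟨hlast, hlt⟩ := mem_edgeChoices.1 hg
  obtain ⟨hlast', -⟩ := mem_edgeChoices.1 hg'
  funext i
  rcases eq_or_ne i (Fin.last n) with rfl | hi
  · rw [hlast, hlast']
  · by_contra hne
    refine (throughput_pos hN hi (g := g)).ne' ?_
    rw [← treeFlow_apply_self (hlt i hi), h, treeFlow_of_ne hne]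

lemma treeFlow_update_swap (hj : i < j) (hj' : i < j') :
    treeFlow N (Function.update g i (Equiv.swap j j' (g i))) i j' = treeFlow N g i j := by
  have hthroughput :
      throughput N (Function.update g i (Equiv.swap j j' (g i))) i = throughput N g i :=
    throughput_congr fun k hk ↦ Function.update_of_ne hk.ne _ _
  have hswap : Equiv.swap j j' (g i) = j' ↔ g i = j := by
    rw [Equiv.swap_apply_eq_iff, Equiv.swap_apply_right]
  simp only [treeFlow, hthroughput, Function.update_self, hswap, hj, hj', true_and]

lemma sum_treeFlow_eq_sum_treeFlow (N : Fin (n + 1) → ℝ) (hj : i < j) (hj' : i < j') :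
    ∑ g ∈ edgeChoices n, treeFlow N g i j = ∑ g ∈ edgeChoices n, treeFlow N g i j' := by
  let retarget (g : Fin (n + 1) → Fin (n + 1)) := Function.update g i (Equiv.swap j j' (g i))
  have hmem : ∀ g ∈ edgeChoices n, retarget g ∈ edgeChoices n :=
    fun g hg ↦ update_swap_mem_edgeChoices hg hj hj'
  have hinv (g : Fin (n + 1) → Fin (n + 1)) : retarget (retarget g) = g := by simp [retarget]
  exact sum_nbij' retarget retarget hmem hmem (fun g _ ↦ hinv g) (fun g _ ↦ hinv g)
    fun g _ ↦ (treeFlow_update_swap hj hj').symm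

/-- The flow carried by each edge out of `i ≠ Fin.last n` in the average of the extreme points;
this is the `c_{n-i}` of the paper. -/
noncomputable def meanEdgeFlow (N : Fin (n + 1) → ℝ) (i : Fin (n + 1)) : ℝ :=
  N i / ((n : ℝ) - i + 1) + (∑ k ∈ Iic i, N k) / (((n : ℝ) - i) * ((n : ℝ) - i + 1))

lemma natCast_sub_val_pos (hi : i ≠ Fin.last n) : (0 : ℝ) < n - i :=
  sub_pos.2 (Nat.cast_lt.2 (Fin.val_lt_last hi))

lemma meanEdgeFlow_eq_sub (N : Fin (n + 1) → ℝ) (hi : i ≠ Fin.last n) :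
    meanEdgeFlow N i =
      (∑ k ∈ Iic i, N k) / ((n : ℝ) - i) - (∑ k ∈ Iio i, N k) / ((n : ℝ) - i + 1) := by
  have hpos := natCast_sub_val_pos hi
  rw [meanEdgeFlow, ← add_sum_Iio_eq_sum_Iic]
  field_simp
  ring

lemma sum_Iio_meanEdgeFlow (N : Fin (n + 1) → ℝ) (i : Fin (n + 1)) :
    ∑ k ∈ Iio i, meanEdgeFlow N k = (∑ k ∈ Iio i, N k) / ((n : ℝ) - i + 1) := by
  induction i using Fin.induction with
  | zero => simp [← bot_eq_zero]
  | succ i ih =>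
    have hIio : Iio i.succ = Iic i.castSucc := by
      ext k
      simp [Fin.lt_def, Fin.le_def]
    rw [hIio, ← add_sum_Iio_eq_sum_Iic, ih, meanEdgeFlow_eq_sub N (Fin.castSucc_ne_last i),
      sub_add_cancel, Fin.val_succ, Fin.val_castSucc]
    congr 1
    push_cast
    ring

lemma eq_meanEdgeFlow (hf : f ∈ FlowPolytope n N)
    (hconst : ∀ i j j', i < j → i < j' → f i j = f i j') (hij : i < j) :
    f i j = meanEdgeFlow N i := by
  induction i using WellFoundedLT.induction generalizing j with
  | ind i ih =>
    have hi : i ≠ Fin.last n := Fin.ne_last_of_lt hij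
    have hpos := natCast_sub_val_pos hi
    have hout : ∑ j' ∈ Ioi i, f i j' = ((n : ℝ) - i) * f i j := by
      rw [sum_congr rfl fun j' hj' ↦ hconst i j' j (mem_Ioi.1 hj') hij, sum_const, nsmul_eq_mul,
        Fin.card_Ioi, Nat.add_sub_cancel, Nat.cast_sub i.is_le]
    have hin : ∑ k ∈ Iio i, f k i = (∑ k ∈ Iio i, N k) / ((n : ℝ) - i + 1) := by
      rw [← sum_Iio_meanEdgeFlow]
      exact sum_congr rfl fun k hk ↦ ih k (mem_Iio.1 hk) (mem_Iio.1 hk)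
    have hcons := sum_Ioi_eq hf i
    rw [hout, hin] at hcons
    refine mul_left_cancel₀ hpos.ne' (hcons.trans ?_)
    rw [meanEdgeFlow_eq_sub N hi, ← add_sum_Iio_eq_sum_Iic]
    field_simp
    ring

lemma mean_treeFlow (hN : ∀ i ≠ Fin.last n, 0 ≤ N i) (hsum : ∑ i, N i = 0) :
    (n.factorial : ℝ)⁻¹ • ∑ g ∈ edgeChoices n, treeFlow N g =
      fun i j ↦ if i < j then meanEdgeFlow N i else 0 := by
  set mean := (n.factorial : ℝ)⁻¹ • ∑ g ∈ edgeChoices n, treeFlow N g with hmean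
  have hmem : mean ∈ FlowPolytope n N := by
    rw [hmean, smul_sum]
    refine convex.sum_mem (fun _ _ ↦ by positivity) ?_ fun g hg ↦ treeFlow_mem hN hsum hg
    rw [sum_const, card_edgeChoices, nsmul_eq_mul, mul_inv_cancel₀ (by positivity)]
  have hconst (i j j' : Fin (n + 1)) (hj : i < j) (hj' : i < j') : mean i j = mean i j' := by
    simp only [hmean, Pi.smul_apply, Finset.sum_apply, sum_treeFlow_eq_sum_treeFlow N hj hj']
  ext i j
  split_ifs with hij
  · exact eq_meanEdgeFlow hmem hconst hij
  · exact eq_zero_of_not_lt hmem hij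

lemma meanEdgeFlow_intCast (N : Fin (n + 1) → ℤ) (i : Fin (n + 1)) :
    meanEdgeFlow (fun k ↦ (N k : ℝ)) i =
      (∑ m : Fin (n + 1), if (m : ℕ) = n - (n - (i : ℕ)) then (N m : ℝ) else 0) /
          (((n - (i : ℕ) : ℕ) : ℝ) + 1) +
        ((sPartial n N (n - (n - (i : ℕ))) : ℤ) : ℝ) /
          (((n - (i : ℕ) : ℕ) : ℝ) * (((n - (i : ℕ) : ℕ) : ℝ) + 1)) := by
  have hpartial : ((sPartial n N i : ℤ) : ℝ) = ∑ k ∈ Iic i, (N k : ℝ) := by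
    simp only [sPartial, ← Fin.le_def, ← sum_filter, filter_ge_eq_Iic, Int.cast_sum]
  rw [Nat.sub_sub_self i.is_le, Nat.cast_sub i.is_le, hpartial, meanEdgeFlow]
  simp [Fin.val_inj]

end FlowPolytope

lemma sum_extend {n : ℕ} (N : Fin n → ℤ) : ∑ i, extend n N i = 0 := by
  simp [extend, Fin.sum_univ_castSucc]

lemma extend_pos {n : ℕ} {N : Fin n → ℤ} (hN : ∀ i, 0 < N i) {i : Fin (n + 1)}
    (hi : i ≠ Fin.last n) : 0 < extend n N i := by
  obtain ⟨k, rfl⟩ := Fin.exists_castSucc_eq.2 hi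
  simpa [extend] using hN k

open FlowPolytope in
theorem average_extremePoints_Tesler_general {n : ℕ} {N : Fin (n + 1) → ℝ}
    (hN : ∀ i ≠ Fin.last n, 0 < N i) (hsum : ∑ i, N i = 0) :
    ((FlowPolytope n N).extremePoints ℝ).ncard = n.factorial ∧
      (n.factorial : ℝ)⁻¹ • ∑ᶠ v ∈ (FlowPolytope n N).extremePoints ℝ, v =
        fun i j ↦ if i < j then meanEdgeFlow N i else 0 := by
  rw [extremePoints_eq_image_treeFlow hN hsum]
  constructor
  · rw [(injOn_treeFlow hN).ncard_image, Set.ncard_coe_finset, card_edgeChoices]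
  · rw [finsum_mem_image (injOn_treeFlow hN), finsum_mem_coe_finset]
    exact mean_treeFlow (fun i hi ↦ (hN i hi).le) hsum

/-- **Proposition (average of the vertices of the generalized Tesler polytope).**
For positive netflow `(N_0,…,N_{n−1},−∑ N_i)`, with `s_k = ∑_{j=0}^k N_j` and
`c_k = N_{n−k}/(k+1) + s_{n−k}/(k(k+1))` for `1 ≤ k ≤ n`, the flow polytope has
exactly `n!` extreme points and their average is the flow with `f_{ij} = c_{n−i}`
for all `0 ≤ i < j ≤ n`. -/
theorem average_extremePoints_Tesler (n : ℕ) (hn : 1 ≤ n) (N : Fin n → ℕ)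
    (hpos : ∀ i, 0 < N i) :
    (Set.extremePoints ℝ
        (FlowPolytope n fun i => ((extend n fun i => (N i : ℤ)) i : ℝ))).ncard =
      Nat.factorial n ∧
    ((Nat.factorial n : ℝ)⁻¹ •
        ∑ᶠ v ∈ Set.extremePoints ℝ
          (FlowPolytope n fun i => ((extend n fun i => (N i : ℤ)) i : ℝ)), v) =
      fun (i j : Fin (n + 1)) =>
        if i < j then
          (fun k : ℕ =>
            (∑ m : Fin (n + 1), if (m : ℕ) = n - k then
              ((extend n fun i => (N i : ℤ)) m : ℝ) else 0) / ((k : ℝ) + 1) +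
            ((sPartial n (extend n fun i => (N i : ℤ)) (n - k) : ℤ) : ℝ) /
              ((k : ℝ) * ((k : ℝ) + 1))) (n - (i : ℕ))
        else 0 := by
  simpa only [FlowPolytope.meanEdgeFlow_intCast] using average_extremePoints_Tesler_general
    (fun i hi ↦ Int.cast_pos.2 (extend_pos (fun k ↦ Int.natCast_pos.2 (hpos k)) hi))
    (by exact_mod_cast sum_extend fun i ↦ (N i : ℤ))
end

section
/- Let n ≥ 1 and N = (N_0, …, N_n) ∈ ℤ^{n+1} with N_0 + ⋯ + N_n = 0. Write s_k = ∑_{j=0}^{k} N_j and c_k = N_{n−k}/(k+1) + s_{n−k}/(k(k+1)) for 1 ≤ k ≤ n. If s_k ≥ max{0, −(n−k)·N_k} for all 0 ≤ k ≤ n−1, then K_n(N) ≥ (1/n²) · ∏_{k=0}^{n−1} s_k^{s_k}/(1+s_k)^{1+s_k} · ∏_{k=1}^{n} ((c_k+1)^{c_k+1}/c_k^{c_k})^{k}, with the convention 0^0 = 1. -/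
open Finset

/-- `c_k = N_{n−k}/(k+1) + s_{n−k}/(k(k+1))`. -/
noncomputable def cAvg (n : ℕ) (N : Fin (n + 1) → ℤ) (k : ℕ) : ℝ :=
  (∑ m : Fin (n + 1), if (m : ℕ) = n - k then (N m : ℝ) else 0) / ((k : ℝ) + 1) +
  ((sPartial n N (n - k) : ℤ) : ℝ) / ((k : ℝ) * ((k : ℝ) + 1))

/-! A flow is built by processing the vertices in order: each vertex sends its netflow plus its
inflow on to the later ones in an arbitrary way. The multiset of all inflow vectors obtained so far
is exchangeable, so the inflow of the next vertex has a known mean; with `k` later vertices, the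
mean outflow is `k * c_k`. The number of ways to split an outflow into `k` parts is bounded below by
a convex function of it, so Jensen's inequality bounds the growth of the multiset from below by the
value of that function at `k * c_k`. Concavity of the logarithm, telescoped, bounds this value from
below by `exp (k * h(c_k) - h(s_{n-k}))`, and the product over all vertices is the claimed one. -/

section Entropy

open Real

theorem mul_log_le_log_one_add_mul {a u : ℝ} (ha : 0 ≤ a) (ha' : a ≤ 1) (hu : 0 < u) :
    a * log u ≤ log (1 + a * (u - 1)) := by
  have hconc := strictConcaveOn_log_Ioi.concaveOn.right (Set.mem_Ioi.2 hu) (Set.mem_Ioi.2 one_pos)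
    ha (sub_nonneg.2 ha') (add_sub_cancel a 1)
  simp only [smul_eq_mul, log_one, mul_zero, add_zero] at hconc
  rwa [show 1 + a * (u - 1) = a * u + (1 - a) * 1 by ring]

theorem monotoneOn_mul_log_add_one_sub_log :
    MonotoneOn (fun t : ℝ => t * (log (t + 1) - log t)) (Set.Ici 0) := by
  intro x (hx : 0 ≤ x) y _ hxy
  rcases hxy.eq_or_lt with rfl | hxy'
  · rfl
  have hy : 0 < y := hx.trans_lt hxy'
  rcases hx.eq_or_lt with rfl | hx
  · simpa using mul_nonneg hy.le (sub_nonneg.2 (log_le_log hy (by linarith)))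
  -- `1 + 1/y` is the average of `1 + 1/x` and `1` with weight `x/y` on the former.
  have hconc := mul_log_le_log_one_add_mul (a := x / y) (u := (x + 1) / x)
    (by positivity) ((div_le_one hy).2 hxy) (by positivity)
  have havg : 1 + x / y * ((x + 1) / x - 1) = (y + 1) / y := by field_simp; ring
  rw [havg, log_div (by positivity) hx.ne', log_div (by positivity) hy.ne', div_mul_eq_mul_div,
    div_le_iff₀ hy] at hconc
  simpa only [mul_comm y] using hconc

theorem antitoneOn_add_one_mul_log_add_one_sub_log :
    AntitoneOn (fun t : ℝ => (t + 1) * (log (t + 1) - log t)) (Set.Ioi 0) := by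
  intro x (hx : 0 < x) y (hy : 0 < y) hxy
  -- `y/(y+1)` is the average of `x/(x+1)` and `1` with weight `(x+1)/(y+1)` on the former.
  have hconc := mul_log_le_log_one_add_mul (a := (x + 1) / (y + 1)) (u := x / (x + 1))
    (by positivity) ((div_le_one (by positivity)).2 (by linarith)) (by positivity)
  have havg : 1 + (x + 1) / (y + 1) * (x / (x + 1) - 1) = y / (y + 1) := by field_simp; ring
  rw [havg, log_div hx.ne' (by positivity), log_div hy.ne' (by positivity), div_mul_eq_mul_div,
    div_le_iff₀ (by positivity)] at hconc
  simp only
  linarith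

theorem entH_eq_log_add (t : ℝ) : entH t = log (t + 1) + t * (log (t + 1) - log t) := by
  rw [entH]; ring

theorem entH_eq_add_one_mul_add_log (t : ℝ) :
    entH t = (t + 1) * (log (t + 1) - log t) + log t := by
  rw [entH]; ring

theorem monotoneOn_entH : MonotoneOn entH (Set.Ici 0) := by
  intro x hx y hy hxy
  have hmono := monotoneOn_mul_log_add_one_sub_log hx hy hxy
  have hlog : log (x + 1) ≤ log (y + 1) :=
    log_le_log (add_pos_of_nonneg_of_pos hx one_pos) (by linarith)
  rw [entH_eq_log_add, entH_eq_log_add]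
  exact add_le_add hlog hmono

theorem exp_entH_sub_entH_le {c t : ℝ} (hc : 0 ≤ c) (hct : c ≤ t) :
    exp (entH c - entH t) ≤ (c + 1) / (t + 1) := by
  have ht : 0 ≤ t := hc.trans hct
  have hmono := monotoneOn_mul_log_add_one_sub_log hc ht hct
  rw [← exp_log (show 0 < (c + 1) / (t + 1) by positivity), exp_le_exp,
    log_div (by positivity) (by positivity), entH_eq_log_add, entH_eq_log_add]
  linarith

theorem sum_range_entH_add (a : ℝ) (j : ℕ) :
    ∑ i ∈ range j, entH (a + i) = (a + j) * log (a + j) - a * log a := by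
  simpa [entH, add_assoc] using Finset.sum_range_sub (fun i : ℕ => (a + i) * log (a + i)) j

theorem exp_entH_sub_le_prod_one_add_div {d : ℝ} (hd : 0 ≤ d) (j : ℕ) :
    exp ((d + 1 + j) * log (d + 1 + j) - (d + 1) * log (d + 1) - (1 + j) * log (1 + j)) ≤
      ∏ i ∈ range j, (1 + d / (i + 1)) := by
  have hexp : (d + 1 + j) * log (d + 1 + j) - (d + 1) * log (d + 1) - (1 + j) * log (1 + j) =
      ∑ i ∈ range j, (entH (d + 1 + i) - entH (1 + i)) := by
    rw [sum_sub_distrib, sum_range_entH_add, sum_range_entH_add]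
    simp
  rw [hexp, exp_sum]
  refine prod_le_prod (fun i _ => (exp_pos _).le) fun i _ => ?_
  have hi : (0 : ℝ) < 1 + i := by positivity
  have hdi : (0 : ℝ) < d + 1 + i := by positivity
  have hanti := antitoneOn_add_one_mul_log_add_one_sub_log hi hdi (by linarith)
  calc exp (entH (d + 1 + i) - entH (1 + i)) ≤ exp (log (d + 1 + i) - log (1 + i)) := by
        rw [exp_le_exp, entH_eq_add_one_mul_add_log, entH_eq_add_one_mul_add_log (1 + i)]
        linarith
    _ = 1 + d / (i + 1) := by
        rw [exp_sub, exp_log hdi, exp_log hi]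
        field_simp
        ring

theorem mul_entH_sub_entH_mul (j : ℕ) {c : ℝ} (hc : 0 ≤ c) :
    (j + 1) * entH c - entH ((j + 1) * c) =
      ((j + 1) * c + 1 + j) * log ((j + 1) * c + 1 + j)
        - ((j + 1) * c + 1) * log ((j + 1) * c + 1) - (1 + j) * log (1 + j) := by
  have hj : (0 : ℝ) < j + 1 := by positivity
  have hlog : log ((j + 1) * c + 1 + j) = log (j + 1) + log (c + 1) := by
    rw [← log_mul hj.ne' (by positivity)]
    ring_nf
  rcases hc.eq_or_lt with rfl | hc
  · simp [entH, add_comm]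
  · rw [entH, entH, hlog, log_mul hj.ne' hc.ne', add_comm (1 : ℝ)]
    ring

theorem exp_mul_entH_sub_entH_le {c t : ℝ} (hc : 0 ≤ c) (j : ℕ) (hct : (j + 1) * c ≤ t) :
    exp ((j + 1) * entH c - entH t) ≤ ∏ i ∈ range j, (1 + (j + 1) * c / (i + 1)) := by
  have hd : 0 ≤ (j + 1) * c := by positivity
  calc exp ((j + 1) * entH c - entH t) ≤ exp ((j + 1) * entH c - entH ((j + 1) * c)) :=
        exp_le_exp.2 (sub_le_sub_left (monotoneOn_entH hd (hd.trans hct) hct) _)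
    _ ≤ ∏ i ∈ range j, (1 + (j + 1) * c / (i + 1)) := by
        rw [mul_entH_sub_entH_mul j hc]
        exact exp_entH_sub_le_prod_one_add_div hd j

theorem exp_entH {t : ℝ} (ht : 0 ≤ t) : exp (entH t) = (t + 1) ^ (t + 1) / t ^ t := by
  have rpow_self {x : ℝ} (hx : 0 ≤ x) : x ^ x = exp (x * log x) := by
    rcases hx.eq_or_lt with rfl | hx
    · simp
    · rw [rpow_def_of_pos hx, mul_comm]
  rw [entH, exp_sub, rpow_self ht, rpow_self (by positivity)]

end Entropy

section Convexity

theorem card_mul_le_sum_map_of_convexOn {α : Type*} {s : Set ℝ} {f : ℝ → ℝ} (hf : ConvexOn ℝ s f)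
    {B : Multiset α} {g : α → ℝ} (hg : ∀ b ∈ B, g b ∈ s) {x : ℝ}
    (hx : (B.map g).sum = B.card * x) :
    B.card * f x ≤ (B.map fun b => f (g b)).sum := by
  classical
  rcases eq_or_ne B 0 with rfl | hB
  · simp
  have hcard : (0 : ℝ) < B.card := by exact_mod_cast Multiset.card_pos.2 hB
  have hsum (h : α → ℝ) : ∑ b : B, (B.card : ℝ)⁻¹ • h b = (B.card : ℝ)⁻¹ * (B.map h).sum := by
    rw [← smul_sum, smul_eq_mul, Finset.sum, Multiset.map_univ]
  have hjensen := hf.map_sum_le (t := (univ : Finset B)) (w := fun _ => (B.card : ℝ)⁻¹)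
    (p := fun b => g b) (fun _ _ => by positivity) (by simp [hcard.ne'])
    (fun b _ => hg b (Multiset.coe_mem))
  rwa [hsum, hsum fun b => f (g b), hx, inv_mul_cancel_left₀ hcard.ne', inv_mul_eq_div,
    le_div_iff₀' hcard] at hjensen

/-- The polynomial `binom (x + k) k = ∏_{i=1}^{k} (1 + x/i)` with each factor truncated at `0`.
The truncation makes it convex on all of `ℝ`, and for `k ≥ 1` makes it vanish for `x ≤ -1`, in
agreement with the number of ways to write `x` as an ordered sum of `k + 1` natural numbers. -/
noncomputable def truncBinom (k : ℕ) (x : ℝ) : ℝ :=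
  ∏ i ∈ range k, max 0 (1 + x / (i + 1))

theorem truncBinom_succ (k : ℕ) (x : ℝ) :
    truncBinom (k + 1) x = truncBinom k x * max 0 (1 + x / (k + 1)) :=
  prod_range_succ ..

theorem truncBinom_nonneg (k : ℕ) (x : ℝ) : 0 ≤ truncBinom k x :=
  prod_nonneg fun _ _ => le_max_left _ _

theorem monotone_truncBinom (k : ℕ) : Monotone (truncBinom k) := fun x y hxy =>
  prod_le_prod (fun _ _ => le_max_left _ _) fun i _ => by gcongr

theorem convexOn_truncBinom (k : ℕ) : ConvexOn ℝ Set.univ (truncBinom k) := by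
  induction k with
  | zero =>
    rw [show truncBinom 0 = fun _ => 1 from funext fun _ => prod_range_zero _]
    exact convexOn_const 1 convex_univ
  | succ k ih =>
    have hfactor : ConvexOn ℝ Set.univ fun x : ℝ => max 0 (1 + x / (k + 1)) := by
      refine (convexOn_const 0 convex_univ).sup ((convexOn_const 1 convex_univ).add ?_)
      simp only [div_eq_inv_mul]
      exact (convexOn_id convex_univ).smul (by positivity : (0 : ℝ) ≤ (k + 1 : ℝ)⁻¹)
    have hmono : Monotone fun x : ℝ => max 0 (1 + x / (k + 1)) := fun x y hxy => by
      simp only; gcongr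
    rw [show truncBinom (k + 1) = truncBinom k * fun x : ℝ => max 0 (1 + x / (k + 1)) from
      funext (truncBinom_succ k)]
    exact ih.mul hfactor (fun x _ => truncBinom_nonneg k x) (fun x _ => le_max_left _ _)
      ((monotone_truncBinom k).monovary hmono |>.monovaryOn _)

theorem truncBinom_of_nonneg (k : ℕ) {x : ℝ} (hx : 0 ≤ x) :
    truncBinom k x = ∏ i ∈ range k, (1 + x / (i + 1)) :=
  prod_congr rfl fun _ _ => max_eq_right (by positivity)

theorem truncBinom_succ_of_le_neg_one (k : ℕ) {x : ℝ} (hx : x ≤ -1) :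
    truncBinom (k + 1) x = 0 :=
  prod_eq_zero (mem_range.2 k.succ_pos) <| by simpa using (by linarith : 1 + x ≤ 0)

theorem truncBinom_natCast (k m : ℕ) : truncBinom k m = (m + k).choose k := by
  induction k with
  | zero => simp [truncBinom]
  | succ k ih =>
    have hchoose : ((m + k + 1 : ℕ) : ℝ) * (m + k).choose k =
        (m + (k + 1)).choose (k + 1) * (k + 1 : ℕ) := by
      exact_mod_cast Nat.add_one_mul_choose_eq (m + k) k
    rw [truncBinom_succ, ih, max_eq_right (by positivity)]
    push_cast at hchoose
    field_simp
    linarith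

end Convexity

section Compositions

/-- The weak compositions of the integer `d` into `k` parts: all `g : Fin k → ℕ` with
`∑ i, g i = d`. There are none if `d < 0`. -/
def weakCompositions (k : ℕ) (d : ℤ) : Finset (Fin k → ℕ) :=
  if 0 ≤ d then piAntidiag univ d.toNat else ∅

theorem mem_weakCompositions {k : ℕ} {d : ℤ} {g : Fin k → ℕ} :
    g ∈ weakCompositions k d ↔ ∑ i, (g i : ℤ) = d := by
  rw [weakCompositions, ← Nat.cast_sum]
  split_ifs with hd
  · lift d to ℕ using hd
    simp only [mem_piAntidiag, mem_univ, implies_true, and_true, Int.toNat_natCast]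
    exact Nat.cast_inj.symm
  · simp only [notMem_empty, false_iff]
    exact fun h => hd (h ▸ Nat.cast_nonneg _)

theorem card_weakCompositions_natCast (k m : ℕ) :
    #(weakCompositions (k + 1) m) = (m + k).choose k := by
  rw [weakCompositions, if_pos m.cast_nonneg, Int.toNat_natCast, ← map_sym_eq_piAntidiag, card_map,
    sym_univ, card_univ, Sym.card_sym_eq_choose, Fintype.card_fin,
    show k + 1 + m - 1 = m + k by omega, Nat.choose_symm_add]

theorem weakCompositions_of_neg {k : ℕ} {d : ℤ} (hd : d < 0) : weakCompositions k d = ∅ :=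
  if_neg hd.not_ge

theorem card_weakCompositions_add_two (k : ℕ) (d : ℤ) :
    (#(weakCompositions (k + 2) d) : ℝ) = truncBinom (k + 1) d := by
  rcases lt_or_ge d 0 with hd | hd
  · rw [weakCompositions_of_neg hd, truncBinom_succ_of_le_neg_one, card_empty, Nat.cast_zero]
    exact_mod_cast Int.le_sub_one_of_lt hd
  · lift d to ℕ using hd
    rw [card_weakCompositions_natCast, Int.cast_natCast, truncBinom_natCast]

theorem div_le_card_weakCompositions_one {d t : ℤ} (ht : 0 ≤ t) (hdt : d ≤ t) :
    ((d : ℝ) + 1) / (t + 1) ≤ #(weakCompositions 1 d) := by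
  have ht' : (0 : ℝ) < t + 1 := by exact_mod_cast Int.lt_add_one_of_le ht
  rcases lt_or_ge d 0 with hd | hd
  · rw [weakCompositions_of_neg hd, card_empty, Nat.cast_zero]
    exact div_nonpos_of_nonpos_of_nonneg (by exact_mod_cast hd) ht'.le
  · lift d to ℕ using hd
    rw [card_weakCompositions_natCast, Nat.choose_zero_right, Nat.cast_one, div_le_one ht']
    exact_mod_cast Int.add_le_add_right hdt 1

theorem exists_convexOn_le_card_weakCompositions {k : ℕ} (hk : k ≠ 0) {c : ℝ} (hc : 0 ≤ c) {t : ℤ}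
    (hct : k * c ≤ t) :
    ∃ f : ℝ → ℝ, ConvexOn ℝ Set.univ f ∧ (∀ d : ℤ, d ≤ t → f d ≤ #(weakCompositions k d)) ∧
      Real.exp (k * entH c - entH t) ≤ f (k * c) := by
  obtain _ | _ | k := k
  · exact absurd rfl hk
  · simp only [zero_add, Nat.cast_one, one_mul] at hct ⊢
    have ht : (0 : ℝ) ≤ t := hc.trans hct
    refine ⟨fun x => (x + 1) / (t + 1), ?_,
      fun d => div_le_card_weakCompositions_one (by exact_mod_cast ht), exp_entH_sub_entH_le hc hct⟩
    simp only [div_eq_inv_mul]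
    exact ((convexOn_id convex_univ).add (convexOn_const 1 convex_univ)).smul (by positivity)
  · refine ⟨truncBinom (k + 1), convexOn_truncBinom _,
      fun d _ => (card_weakCompositions_add_two k d).ge, ?_⟩
    rw [truncBinom_of_nonneg _ (by positivity)]
    push_cast at hct ⊢
    exact_mod_cast exp_mul_entH_sub_entH_le hc (k + 1) (by exact_mod_cast hct)

end Compositions

section Exchangeable

/-- A multiset of vectors is exchangeable if it is invariant under permuting the coordinates of all
its members simultaneously, i.e. a uniformly random member has exchangeable coordinates. -/
def IsExchangeable {ι α : Type*} (B : Multiset (ι → α)) : Prop :=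
  ∀ σ : Equiv.Perm ι, B.map (fun b => b ∘ σ) = B

theorem IsExchangeable.sum_map_apply_eq {ι α M : Type*} [AddCommMonoid M] {B : Multiset (ι → α)}
    (hB : IsExchangeable B) (F : α → M) (i j : ι) :
    (B.map fun b => F (b i)).sum = (B.map fun b => F (b j)).sum := by
  classical
  conv_lhs => rw [← hB (Equiv.swap i j)]
  simp

theorem IsExchangeable.sum_map_apply {ι : Type*} [Fintype ι] {B : Multiset (ι → ℕ)}
    (hB : IsExchangeable B) {s : ℤ} (hs : ∀ b ∈ B, ∑ i, (b i : ℤ) = s) (i : ι) :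
    (B.map fun b => (b i : ℝ)).sum = B.card * (s / Fintype.card ι) := by
  have : Nonempty ι := ⟨i⟩
  have htotal : (B.map fun b => ∑ j, (b j : ℝ)).sum = B.card * s := by
    rw [Multiset.map_congr rfl (g := fun _ => (s : ℝ)) fun b hb => by exact_mod_cast hs b hb]
    simp
  rw [Multiset.sum_map_sum, sum_congr rfl fun j _ => hB.sum_map_apply_eq (fun m => (m : ℝ)) j i,
    sum_const, card_univ, nsmul_eq_mul] at htotal
  rw [← mul_div_assoc, ← htotal, mul_div_cancel_left₀ _ (Nat.cast_ne_zero.2 Fintype.card_ne_zero)]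

theorem isExchangeable_weakCompositions (k : ℕ) (d : ℤ) :
    IsExchangeable (weakCompositions k d).val := by
  intro σ
  refine (Multiset.Nodup.ext ((weakCompositions k d).nodup.map
    σ.surjective.injective_comp_right) (weakCompositions k d).nodup).2 fun g => ?_
  simp only [Multiset.mem_map, mem_val, mem_weakCompositions]
  constructor
  · rintro ⟨b, hb, rfl⟩
    exact (Equiv.sum_comp σ fun i => (b i : ℤ)).trans hb
  · exact fun hg => ⟨g ∘ σ.symm, (Equiv.sum_comp σ.symm fun i => (g i : ℤ)).trans hg,
      funext fun i => by simp⟩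

end Exchangeable

section Release

variable {k : ℕ} {m s : ℤ} {B : Multiset (Fin (k + 1) → ℕ)}

/-- Each `b ∈ B` records the inflow received so far by the vertices that are still to be processed.
The first of them, with netflow `m`, sends its `m + b 0` units on to the others in all possible
ways; the resulting inflow vectors form `release m B`. -/
def release (m : ℤ) (B : Multiset (Fin (k + 1) → ℕ)) : Multiset (Fin k → ℕ) :=
  B.bind fun b => (weakCompositions k (m + b 0)).val.map fun g i => b i.succ + g i

theorem IsExchangeable.release (hB : IsExchangeable B) (m : ℤ) :
    IsExchangeable (release m B) := by
  intro σ
  let τ : Equiv.Perm (Fin (k + 1)) := Equiv.Perm.decomposeFin.symm (0, σ)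
  have hτ_zero : τ 0 = 0 := by simp [τ]
  have hτ_succ (i : Fin k) : τ i.succ = (σ i).succ := by simp [τ]
  conv_rhs => rw [← hB τ]
  simp only [_root_.release, Multiset.map_bind, Multiset.bind_map]
  refine Multiset.bind_congr fun b _ => ?_
  simp only [Function.comp_apply, hτ_zero, hτ_succ]
  conv_rhs => rw [← isExchangeable_weakCompositions k (m + b 0) σ]
  simp only [Multiset.map_map, Function.comp_def]

theorem sum_eq_of_mem_release (hB : ∀ b ∈ B, ∑ i, (b i : ℤ) = s) :
    ∀ b ∈ release m B, ∑ i, (b i : ℤ) = s + m := by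
  simp only [release, Multiset.mem_bind, Multiset.mem_map, mem_val, mem_weakCompositions]
  rintro _ ⟨b, hb, g, hg, rfl⟩
  have hb_sum := hB b hb
  rw [Fin.sum_univ_succ] at hb_sum
  push_cast
  rw [sum_add_distrib, hg]
  linarith

theorem card_release (m : ℤ) (B : Multiset (Fin (k + 1) → ℕ)) :
    ((release m B).card : ℝ) = (B.map fun b => (#(weakCompositions k (m + b 0)) : ℝ)).sum := by
  simp [release, Multiset.card_bind, Function.comp_def, Nat.cast_multiset_sum, Multiset.map_map]

theorem card_mul_le_card_release_of_convexOn (hB : IsExchangeable B)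
    (hs : ∀ b ∈ B, ∑ i, (b i : ℤ) = s) {f : ℝ → ℝ} (hf : ConvexOn ℝ Set.univ f)
    (hle : ∀ b ∈ B, f ((m + b 0 : ℤ) : ℝ) ≤ #(weakCompositions k (m + b 0))) :
    B.card * f (m + s / (k + 1)) ≤ (release m B).card := by
  have hmean : (B.map fun b => ((m + b 0 : ℤ) : ℝ)).sum = B.card * (m + s / (k + 1)) := by
    push_cast
    rw [Multiset.sum_map_add, hB.sum_map_apply hs, Fintype.card_fin]
    simp [mul_add]
  rw [card_release]
  exact (card_mul_le_sum_map_of_convexOn hf (fun _ _ => Set.mem_univ _) hmean).trans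
    (Multiset.sum_map_le_sum_map _ _ hle)

/-- `c_k` as a function of `k`, the netflow `m` of vertex `n - k` and the partial sum `t` up to and
including that vertex. It is the mean flow along each of the `k` edges leaving the vertex. -/
noncomputable def meanEdgeFlow (k : ℕ) (m t : ℝ) : ℝ := m / (k + 1) + t / (k * (k + 1))

theorem mul_meanEdgeFlow {k : ℕ} (hk : k ≠ 0) (m s : ℝ) :
    k * meanEdgeFlow k m (s + m) = m + s / (k + 1) := by
  have hk' : (k : ℝ) ≠ 0 := Nat.cast_ne_zero.2 hk
  rw [meanEdgeFlow]
  field_simp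
  ring

theorem meanEdgeFlow_nonneg {k : ℕ} (hk : k ≠ 0) {m t : ℝ} (h : -k * m ≤ t) :
    0 ≤ meanEdgeFlow k m t := by
  have hk' : (k : ℝ) ≠ 0 := Nat.cast_ne_zero.2 hk
  rw [meanEdgeFlow, show m / (k + 1) + t / (k * (k + 1)) = (k * m + t) / (k * (k + 1)) by
    field_simp]
  exact div_nonneg (by linarith) (by positivity)

theorem card_mul_exp_le_card_release (hk : k ≠ 0) (hB : IsExchangeable B)
    (hs : ∀ b ∈ B, ∑ i, (b i : ℤ) = s) (hs₀ : 0 ≤ s) (hm : -k * m ≤ s + m) :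
    B.card * Real.exp (k * entH (meanEdgeFlow k m (s + m)) - entH (s + m)) ≤
      (release m B).card := by
  have hc : 0 ≤ meanEdgeFlow k m (s + m) := meanEdgeFlow_nonneg hk (by exact_mod_cast hm)
  have hct : k * meanEdgeFlow k m (s + m) ≤ (s + m : ℤ) := by
    rw [mul_meanEdgeFlow hk, Int.cast_add, add_comm (s : ℝ)]
    gcongr
    exact div_le_self (by exact_mod_cast hs₀) (by simp)
  obtain ⟨f, hf, hle, hexp⟩ := exists_convexOn_le_card_weakCompositions hk hc hct
  rw [mul_meanEdgeFlow hk, Int.cast_add] at hexp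
  refine (mul_le_mul_of_nonneg_left hexp (Nat.cast_nonneg _)).trans
    (card_mul_le_card_release_of_convexOn hB hs hf fun b hb => hle _ ?_)
  rw [← hs b hb, add_comm]
  gcongr
  exact single_le_sum (f := fun i => (b i : ℤ)) (fun _ _ => Nat.cast_nonneg _) (mem_univ 0)

end Release

section Flow

theorem isIntFlow_zero_iff {M : Fin 1 → ℤ} {f : Fin 1 → Fin 1 → ℕ} :
    IsIntFlow 0 M f ↔ f = 0 ∧ M 0 = 0 := by
  simp [IsIntFlow, funext_iff, eq_comm]

theorem isIntFlow_succ_iff {n : ℕ} {M : Fin (n + 2) → ℤ} {f : Fin (n + 2) → Fin (n + 2) → ℕ} :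
    IsIntFlow (n + 1) M f ↔
      (∀ i, f i 0 = 0) ∧ (fun j => f 0 j.succ) ∈ weakCompositions (n + 1) (M 0) ∧
        IsIntFlow n (fun i => M i.succ + f 0 i.succ) fun i j => f i.succ j.succ := by
  simp only [IsIntFlow, mem_weakCompositions, Fin.forall_fin_succ (n := n + 1),
    Fin.sum_univ_succ (n := n + 1), Fin.not_lt_zero, Fin.succ_lt_succ_iff, Fin.succ_pos, if_true,
    if_false, not_true_eq_false, not_false_eq_true, false_imp_iff, forall_const, forall_and,
    sum_const_zero, add_zero, zero_add, sub_add_eq_sub_sub_swap, sub_eq_iff_eq_add]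
  tauto

/-- An integer flow on `k_{n+2}` amounts to the flows `g` out of the first vertex together with an
integer flow on the remaining vertices, whose netflows are increased by `g`. -/
def flowEquiv (n : ℕ) (M : Fin (n + 2) → ℤ) :
    {f // IsIntFlow (n + 1) M f} ≃
      Σ g : weakCompositions (n + 1) (M 0), {f // IsIntFlow n (fun i => M i.succ + g.1 i) f} where
  toFun f := ⟨⟨fun j => f.1 0 j.succ, (isIntFlow_succ_iff.1 f.2).2.1⟩,
    fun i j => f.1 i.succ j.succ, (isIntFlow_succ_iff.1 f.2).2.2⟩
  invFun p := ⟨Fin.cons (Fin.cons 0 p.1.1) fun i => Fin.cons 0 (p.2.1 i),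
    isIntFlow_succ_iff.2 ⟨Fin.cases rfl fun _ => rfl, p.1.2, p.2.2⟩⟩
  left_inv f := Subtype.ext <| funext fun i => funext fun j => by
    have hcol := (isIntFlow_succ_iff.1 f.2).1
    cases i using Fin.cases <;> cases j using Fin.cases <;> simp [hcol]
  right_inv _ := rfl

theorem finite_isIntFlow (n : ℕ) (M : Fin (n + 1) → ℤ) : Finite {f // IsIntFlow n M f} := by
  induction n with
  | zero =>
    have : Subsingleton {f // IsIntFlow 0 M f} :=
      ⟨fun f g => Subtype.ext <|
        (isIntFlow_zero_iff.1 f.2).1.trans (isIntFlow_zero_iff.1 g.2).1.symm⟩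
    infer_instance
  | succ n ih =>
    have (g : weakCompositions (n + 1) (M 0)) := ih fun i => M i.succ + g.1 i
    exact Finite.of_equiv _ (flowEquiv n M).symm

theorem Kn_zero {M : Fin 1 → ℤ} (hM : M 0 = 0) : Kn 0 M = 1 := by
  simp [Kn, isIntFlow_zero_iff, hM]

theorem Kn_succ (n : ℕ) (M : Fin (n + 2) → ℤ) :
    Kn (n + 1) M = ∑ g ∈ weakCompositions (n + 1) (M 0), Kn n fun i => M i.succ + g i := by
  have (g : weakCompositions (n + 1) (M 0)) := finite_isIntFlow n fun i => M i.succ + g.1 i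
  rw [Kn, Nat.card_congr (flowEquiv n M), Nat.card_sigma]
  exact sum_coe_sort (weakCompositions (n + 1) (M 0)) fun g => Kn n fun i => M i.succ + g i

theorem sum_map_Kn_release (n : ℕ) (M : Fin (n + 2) → ℤ) (B : Multiset (Fin (n + 2) → ℕ)) :
    ((release (M 0) B).map fun b => Kn n fun i => M i.succ + b i).sum =
      (B.map fun b => Kn (n + 1) fun i => M i + b i).sum := by
  simp only [release, Multiset.map_bind, Multiset.sum_bind, Multiset.map_map, Function.comp_def,
    Kn_succ, Finset.sum, Nat.cast_add, add_assoc]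

end Flow

section Induction

theorem sPartial_zero (n : ℕ) (M : Fin (n + 1) → ℤ) : sPartial n M 0 = M 0 := by
  simp [sPartial]

theorem sPartial_succ (n : ℕ) (M : Fin (n + 2) → ℤ) (k : ℕ) :
    sPartial (n + 1) M (k + 1) = M 0 + sPartial n (Fin.tail M) k := by
  simp [sPartial, Fin.sum_univ_succ (n := n + 1), Fin.tail]

/-- The hypothesis on the netflow `M` of the remaining vertices when a flow of total size `s` enters
them from the vertices processed so far, which shifts all partial sums by `s`. -/
def IsAdmissible (n : ℕ) (M : Fin (n + 1) → ℤ) (s : ℤ) : Prop :=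
  ∀ i : Fin n, max 0 (-((n : ℤ) - i) * M i.castSucc) ≤ s + sPartial n M i

/-- The logarithm of the product in the lower bound for the netflow `M`, with the partial sums
shifted by the flow `s` entering from the vertices processed so far. -/
noncomputable def entropyBound (n : ℕ) (M : Fin (n + 1) → ℤ) (s : ℤ) : ℝ :=
  ∑ i : Fin n, ((n - i : ℕ) *
    entH (meanEdgeFlow (n - i) (M i.castSucc) (s + sPartial n M i)) - entH (s + sPartial n M i))

theorem IsAdmissible.tail {n : ℕ} {M : Fin (n + 2) → ℤ} {s : ℤ} (h : IsAdmissible (n + 1) M s) :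
    IsAdmissible n (Fin.tail M) (s + M 0) := fun i => by
  have hi := h i.succ
  rw [Fin.val_succ, sPartial_succ, ← add_assoc, ← Fin.succ_castSucc] at hi
  push_cast at hi
  rwa [add_sub_add_right_eq_sub] at hi

theorem entropyBound_succ (n : ℕ) (M : Fin (n + 2) → ℤ) (s : ℤ) :
    entropyBound (n + 1) M s =
      ((n + 1 : ℕ) * entH (meanEdgeFlow (n + 1) (M 0) (s + M 0)) - entH (s + M 0)) +
        entropyBound n (Fin.tail M) (s + M 0) := by
  simp only [entropyBound, Fin.sum_univ_succ (n := n), Fin.val_zero, Fin.val_succ, Nat.sub_zero,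
    Nat.add_sub_add_right, sPartial_zero, sPartial_succ, Fin.castSucc_zero, Fin.castSucc_succ,
    Fin.tail, Int.cast_add, add_assoc]

theorem card_mul_exp_entropyBound_le {n : ℕ} {M : Fin (n + 1) → ℤ} {s : ℤ}
    {B : Multiset (Fin (n + 1) → ℕ)} (hM : IsAdmissible n M s) (hB : IsExchangeable B)
    (hBs : ∀ b ∈ B, ∑ i, (b i : ℤ) = s) (hs : 0 ≤ s) (hsum : s + ∑ i, M i = 0) :
    B.card * Real.exp (entropyBound n M s) ≤
      ((B.map fun b => Kn n fun i => M i + b i).sum : ℕ) := by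
  induction n generalizing s with
  | zero =>
    have hKn : ∀ b ∈ B, Kn 0 (fun i => M i + b i) = 1 := fun b hb => Kn_zero <| by
      simpa [Fin.sum_univ_succ, ← hBs b hb, add_comm] using hsum
    simp [entropyBound, Multiset.map_congr rfl hKn]
  | succ n ih =>
    have hM₀ := hM 0
    rw [Fin.val_zero, sPartial_zero, max_le_iff] at hM₀
    have hrelease := card_mul_exp_le_card_release n.succ_ne_zero hB hBs hs (m := M 0)
      (by simpa using hM₀.2)
    have hrec := ih hM.tail (hB.release (M 0)) (sum_eq_of_mem_release hBs) hM₀.1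
      (by rw [← hsum, Fin.sum_univ_succ M, add_assoc]; rfl)
    rw [entropyBound_succ, Real.exp_add, ← mul_assoc, ← sum_map_Kn_release]
    exact (mul_le_mul_of_nonneg_right hrelease (Real.exp_pos _).le).trans hrec

end Induction

section Products

theorem cAvg_eq_meanEdgeFlow {n : ℕ} (N : Fin (n + 1) → ℤ) (i : Fin n) :
    cAvg n N (n - i) = meanEdgeFlow (n - i) (N i.castSucc) (sPartial n N i) := by
  have hvertex : ∑ m : Fin (n + 1), (if (m : ℕ) = i then (N m : ℝ) else 0) = N i.castSucc :=
    (sum_eq_single_of_mem i.castSucc (mem_univ _) fun _ _ hm =>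
      if_neg (Fin.val_ne_iff.2 hm)).trans (if_pos i.val_castSucc)
  rw [cAvg, meanEdgeFlow, Nat.sub_sub_self i.isLt.le, hvertex]

theorem prod_Icc_one_eq_prod_fin_sub {M : Type*} [CommMonoid M] (f : ℕ → M) (n : ℕ) :
    ∏ k ∈ Icc 1 n, f k = ∏ i : Fin n, f (n - i) := by
  rw [← prod_range fun i => f (n - i), range_eq_Ico, prod_Ico_reflect f 0 n.le_succ]
  simp [← Ico_add_one_right_eq_Icc]

theorem exp_entropyBound_zero {n : ℕ} {N : Fin (n + 1) → ℤ} (hN : IsAdmissible n N 0) :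
    Real.exp (entropyBound n N 0) =
      (∏ k ∈ range n, ((sPartial n N k : ℤ) : ℝ) ^ ((sPartial n N k : ℤ) : ℝ) /
          (1 + ((sPartial n N k : ℤ) : ℝ)) ^ (1 + ((sPartial n N k : ℤ) : ℝ))) *
        ∏ k ∈ Icc 1 n, ((cAvg n N k + 1) ^ (cAvg n N k + 1) / cAvg n N k ^ cAvg n N k) ^ k := by
  rw [prod_Icc_one_eq_prod_fin_sub, prod_range, ← prod_mul_distrib, entropyBound, Real.exp_sum]
  refine prod_congr rfl fun i _ => ?_
  obtain ⟨ht, hc⟩ := max_le_iff.1 (hN i)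
  rw [zero_add] at ht hc
  rw [← Nat.cast_sub i.isLt.le] at hc
  have hc₀ : 0 ≤ meanEdgeFlow (n - i) (N i.castSucc) (sPartial n N i) :=
    meanEdgeFlow_nonneg (Nat.sub_ne_zero_of_lt i.isLt) (by exact_mod_cast hc)
  rw [cAvg_eq_meanEdgeFlow, ← exp_entH hc₀, ← Real.exp_nat_mul, Int.cast_zero, zero_add,
    Real.exp_sub, exp_entH (by exact_mod_cast ht), add_comm (1 : ℝ), div_div_eq_mul_div,
    mul_div_assoc, mul_comm]

end Products

theorem kostant_general_lower_bound_one_general (n : ℕ) (N : Fin (n + 1) → ℤ) (hsum : ∑ i, N i = 0)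
    (hs : ∀ k : Fin n, max 0 (-((n : ℤ) - (k : ℕ)) * N k.castSucc) ≤ sPartial n N k) :
    (∏ k ∈ range n, ((sPartial n N k : ℤ) : ℝ) ^ ((sPartial n N k : ℤ) : ℝ) /
        (1 + ((sPartial n N k : ℤ) : ℝ)) ^ (1 + ((sPartial n N k : ℤ) : ℝ))) *
      (∏ k ∈ Icc 1 n, ((cAvg n N k + 1) ^ (cAvg n N k + 1) / cAvg n N k ^ cAvg n N k) ^ k) ≤
      (Kn n N : ℝ) := by
  have hN : IsAdmissible n N 0 := fun k => (hs k).trans_eq (zero_add _).symm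
  have hzero : IsExchangeable ({0} : Multiset (Fin (n + 1) → ℕ)) := fun _ => rfl
  rw [← exp_entropyBound_zero hN]
  simpa using card_mul_exp_entropyBound_le hN hzero (by simp) le_rfl ((zero_add _).trans hsum)

/-- **Theorem (general lower bound, part 1).** If `s_k ≥ max{0, −(n−k)·N_k}` for
all `0 ≤ k ≤ n−1`, then
`K_n(N) ≥ (1/n²) · ∏_{k=0}^{n−1} s_k^{s_k}/(1+s_k)^{1+s_k}
  · ∏_{k=1}^{n} ((c_k+1)^{c_k+1}/c_k^{c_k})^k`
(real powers, with the convention `0^0 = 1`). -/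
theorem kostant_general_lower_bound_one (n : ℕ) (hn : 1 ≤ n) (N : Fin (n + 1) → ℤ)
    (hsum : ∑ i, N i = 0)
    (hs : ∀ k : Fin n,
      max 0 (-((n : ℤ) - (k : ℕ)) * N k.castSucc) ≤ sPartial n N k) :
    (1 / ((n : ℝ) ^ 2)) *
      (∏ k ∈ Finset.range n,
        ((sPartial n N k : ℤ) : ℝ) ^ ((sPartial n N k : ℤ) : ℝ) /
          (1 + ((sPartial n N k : ℤ) : ℝ)) ^ (1 + ((sPartial n N k : ℤ) : ℝ))) *
      (∏ k ∈ Finset.Icc 1 n,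
        ((cAvg n N k + 1) ^ (cAvg n N k + 1) / cAvg n N k ^ cAvg n N k) ^ k) ≤
      (Kn n N : ℝ) := by
  rw [mul_assoc]
  exact (mul_le_mul_of_nonneg_left (kostant_general_lower_bound_one_general n N hsum hs)
    (by positivity)).trans <| mul_le_of_le_one_left (Nat.cast_nonneg _) <|
      div_le_self zero_le_one (one_le_pow₀ (by exact_mod_cast hn))
end
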